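/- Let G be a group generated by a finite set X admitting a (possibly infinite) reduced presentation ⟨X | R⟩ satisfying the C'(1/6) small cancellation condition. Then G has linear isoperimetric spectrum: f_{G,X}(k,m,n) ∼ n/m. -/

import Mathlib

open Function

namespace IsoSpecPaper

variable {ι : Type*} {G : Type*} [Group G]

/-- The (reduced) length of an element of a free group. -/
noncomputable def wnorm (w : FreeGroup ι) : ℕ :=
  @FreeGroup.norm ι (Classical.decEq ι) w

/-- `triv φ k` : the set of words of length at most `k` in the generators
(and their inverses) representing the identity of `G` under the marking `φ`. -/
noncomputable def triv (φ : FreeGroup ι →* G) (k : ℕ) : Set (FreeGroup ι) :=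
  {w | wnorm w ≤ k ∧ φ w = 1}

/-- `AreaLe R w l` : `w` is a product of `l` conjugates of elements of `R` or
their inverses in the free group. -/
def AreaLe (R : Set (FreeGroup ι)) (w : FreeGroup ι) (l : ℕ) : Prop :=
  ∃ L : List (FreeGroup ι × FreeGroup ι), L.length = l ∧
    (∀ p ∈ L, p.2 ∈ R ∨ p.2⁻¹ ∈ R) ∧
    w = (L.map fun p => p.1⁻¹ * p.2 * p.1).prod

/-- The area of `w` with respect to the set of relators `R`. -/
noncomputable def area (R : Set (FreeGroup ι)) (w : FreeGroup ι) : ℕ :=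
  sInf {l | AreaLe R w l}

/-- The isoperimetric spectrum of the marked group `(G, φ)`:
`isoSpec φ k m n = max { area_{S_m}(w) : w ∈ ⟪S_k⟫, ‖w‖ ≤ n }`. -/
noncomputable def isoSpec (φ : FreeGroup ι →* G) (k m n : ℕ) : ℕ :=
  sSup (area (triv φ m) '' {w | w ∈ Subgroup.normalClosure (triv φ k) ∧ wnorm w ≤ n})

/-- The real-valued isoperimetric spectrum. -/
noncomputable def isoSpecR (φ : FreeGroup ι →* G) : ℕ → ℕ → ℕ → ℝ :=
  fun k m n => (isoSpec φ k m n : ℝ)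

/-- The Dehn function of the presentation with relators `R`. -/
noncomputable def dehn (R : Set (FreeGroup ι)) (n : ℕ) : ℕ :=
  sSup (area R '' {w | w ∈ Subgroup.normalClosure R ∧ wnorm w ≤ n})

/-- The quasi-order `f ≼ g` on functions of triples `(k,m,n)` of positive integers
with `m ≥ k`. -/
def SpecLE (f g : ℕ → ℕ → ℕ → ℝ) : Prop :=
  ∃ C : ℕ, 0 < C ∧ ∀ k m n : ℕ, 0 < k → 0 < m → 0 < n → C * k ≤ m →
    f k (C * m) n ≤ C * g (C * k) m (C * n) + C * (n : ℝ) / m + C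

/-- Equivalence of isoperimetric functions: `f ∼ g`. -/
def SpecEquiv (f g : ℕ → ℕ → ℕ → ℝ) : Prop := SpecLE f g ∧ SpecLE g f

/-- The linear spectrum `(k,m,n) ↦ n/m`. -/
noncomputable def linSpec : ℕ → ℕ → ℕ → ℝ := fun _ m n => (n : ℝ) / m

/-- The word length of `g ∈ G` with respect to the marking `φ`. -/
noncomputable def wlen (φ : FreeGroup ι →* G) (g : G) : ℕ :=
  sInf {n | ∃ w : FreeGroup ι, wnorm w = n ∧ φ w = g}

/-- The word metric on `G` with respect to the marking `φ`. -/
noncomputable def wdist (φ : FreeGroup ι →* G) (g h : G) : ℕ := wlen φ (g⁻¹ * h)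

/-- Quasi-isometry of marked groups with respect to their word metrics. -/
noncomputable def QuasiIsometric {H : Type*} [Group H] {κ : Type*}
    (φ : FreeGroup ι →* G) (ψ : FreeGroup κ →* H) : Prop :=
  ∃ L : ℝ, 0 ≤ L ∧ ∃ (α : G → H) (β : H → G),
    (∀ x y : G, (wdist ψ (α x) (α y) : ℝ) ≤ L * wdist φ x y + L) ∧
    (∀ u v : H, (wdist φ (β u) (β v) : ℝ) ≤ L * wdist ψ u v + L) ∧
    (∀ t : H, (wdist ψ (α (β t)) t : ℝ) ≤ L) ∧
    (∀ s : G, (wdist φ (β (α s)) s : ℝ) ≤ L)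

/-- A (combinatorial) geodesic path of length `n` in the Cayley graph of `(G, φ)`:
consecutive vertices are at distance at most `1` and the endpoints are at
distance exactly `n`. -/
noncomputable def IsGeodesic (φ : FreeGroup ι →* G) {n : ℕ} (p : Fin (n + 1) → G) : Prop :=
  (∀ i : Fin n, wdist φ (p i.castSucc) (p i.succ) ≤ 1) ∧
  wdist φ (p 0) (p (Fin.last n)) = n

/-- Every vertex of the path `p` lies within distance `δ` of the set `A`. -/
noncomputable def ThinAt (φ : FreeGroup ι →* G) (δ : ℝ) {n : ℕ}
    (p : Fin (n + 1) → G) (A : Set G) : Prop :=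
  ∀ i, ∃ a ∈ A, (wdist φ (p i) a : ℝ) ≤ δ

/-- The Cayley graph of `(G, φ)` is `δ`-hyperbolic: every geodesic triangle is `δ`-thin. -/
noncomputable def HypConst (φ : FreeGroup ι →* G) (δ : ℝ) : Prop :=
  ∀ (n₁ n₂ n₃ : ℕ) (p : Fin (n₁ + 1) → G) (q : Fin (n₂ + 1) → G) (r : Fin (n₃ + 1) → G),
    IsGeodesic φ p → IsGeodesic φ q → IsGeodesic φ r →
    p (Fin.last n₁) = q 0 → q (Fin.last n₂) = r 0 → r (Fin.last n₃) = p 0 →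
    ThinAt φ δ p (Set.range q ∪ Set.range r) ∧
    ThinAt φ δ q (Set.range r ∪ Set.range p) ∧
    ThinAt φ δ r (Set.range p ∪ Set.range q)

/-- The marked group `(G, φ)` is hyperbolic. -/
noncomputable def IsHyperbolic (φ : FreeGroup ι →* G) : Prop :=
  ∃ δ : ℝ, 0 ≤ δ ∧ HypConst φ δ

/-- `G` (marked by `φ`) is a limit (direct limit) of hyperbolic groups. -/
noncomputable def LimitOfHyperbolic (φ : FreeGroup ι →* G) : Prop :=
  Surjective φ ∧ ∃ R : ℕ → Set (FreeGroup ι),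
    (∀ i j, i ≤ j → R i ⊆ R j) ∧
    φ.ker = Subgroup.normalClosure (⋃ i, R i) ∧
    ∀ i, IsHyperbolic (QuotientGroup.mk' (Subgroup.normalClosure (R i)))

/-- `G` (marked by `φ`) is well-approximated by hyperbolic groups. -/
noncomputable def WellApproximated (φ : FreeGroup ι →* G) : Prop :=
  Surjective φ ∧ ∃ R : ℕ → Set (FreeGroup ι),
    (∀ i j, i ≤ j → R i ⊆ R j) ∧
    φ.ker = Subgroup.normalClosure (⋃ i, R i) ∧
    (∀ i, IsHyperbolic (QuotientGroup.mk' (Subgroup.normalClosure (R i)))) ∧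
    ∃ C : ℕ, 0 < C ∧ ∀ i : ℕ, 0 < i →
      (∀ w : FreeGroup ι, wnorm w ≤ i → φ w = 1 →
        w ∈ Subgroup.normalClosure (R i)) ∧
      HypConst (QuotientGroup.mk' (Subgroup.normalClosure (R i))) ((C * i : ℕ) : ℝ)

/-- The formal inverse of a word. -/
def winv {ι : Type*} (w : List (ι × Bool)) : List (ι × Bool) :=
  (w.map fun p => (p.1, !p.2)).reverse

/-- A word is reduced if it contains no subword `x x⁻¹` or `x⁻¹ x`. -/
def ReducedWord {ι : Type*} (w : List (ι × Bool)) : Prop :=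
  w.Chain' fun a b => ¬(a.1 = b.1 ∧ a.2 = !b.2)

/-- All cyclic shifts of relators of `𝓡` and of their inverses. -/
def CyclicShifts {ι : Type*} (𝓡 : Set (List (ι × Bool))) : Set (List (ι × Bool)) :=
  {w | ∃ r ∈ 𝓡, ∃ n : ℕ, w = r.rotate n ∨ w = (winv r).rotate n}

/-- A presentation is reduced if all cyclic shifts of all relators are reduced words. -/
def ReducedPresentation {ι : Type*} (𝓡 : Set (List (ι × Bool))) : Prop :=
  ∀ r ∈ 𝓡, ∀ n : ℕ, ReducedWord (r.rotate n)

/-- The `C'(lam)` small cancellation condition: any common initial subword `U` of two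
distinct cyclic shifts `R₁ ≢ R₂` of relators or their inverses satisfies
`‖U‖ < lam · min(‖R₁‖, ‖R₂‖)`. -/
def SmallCancellation {ι : Type*} (lam : ℝ) (𝓡 : Set (List (ι × Bool))) : Prop :=
  ∀ R₁ ∈ CyclicShifts 𝓡, ∀ R₂ ∈ CyclicShifts 𝓡, R₁ ≠ R₂ →
    ∀ U : List (ι × Bool), U <+: R₁ → U <+: R₂ →
      (U.length : ℝ) < lam * min (R₁.length : ℝ) (R₂.length : ℝ)

set_option linter.unusedSectionVars false
set_option linter.style.longLine false
section basics
variable {α : Type*} [DecidableEq α]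
open FreeGroup

/-- Small cancellation system: symmetrized, reduced, C'(1/6). -/
structure SC (Rs : Set (List (α × Bool))) : Prop where
  rot : ∀ u v, u ++ v ∈ Rs → v ++ u ∈ Rs
  inv : ∀ r ∈ Rs, invRev r ∈ Rs
  red : ∀ r ∈ Rs, FreeGroup.IsReduced r
  ne : ∀ r ∈ Rs, r ≠ []
  pc : ∀ ρ ∈ Rs, ∀ σ ∈ Rs, ρ ≠ σ → ∀ U, U <+: ρ → U <+: σ →
    6 * U.length < ρ.length ∧ 6 * U.length < σ.length

lemma _root_.FreeGroup.IsReduced.subword {u w : List (α × Bool)} (h : FreeGroup.IsReduced w)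
    (hu : u <:+: w) : FreeGroup.IsReduced u := by
  obtain ⟨s, t, rfl⟩ := hu
  exact List.IsChain.right_of_append (List.IsChain.left_of_append h)

/-- product of conjugates -/
def bp (L : List (FreeGroup α × List (α × Bool))) : FreeGroup α :=
  (L.map fun p => p.1⁻¹ * FreeGroup.mk p.2 * p.1).prod

/-- all relators in `Rs` -/
def InR (Rs : Set (List (α × Bool))) (L : List (FreeGroup α × List (α × Bool))) : Prop :=
  ∀ p ∈ L, p.2 ∈ Rs

/-- total conjugator length -/
def tot (L : List (FreeGroup α × List (α × Bool))) : ℕ :=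
  (L.map fun p => p.1.norm + 1).sum

/-- inverse letter -/
def nx (x : α × Bool) : α × Bool := (x.1, !x.2)

/-- area at most n -/
def ALe (Rs : Set (List (α × Bool))) (w : FreeGroup α) (n : ℕ) : Prop :=
  ∃ L, L.length ≤ n ∧ InR Rs L ∧ w = bp L

@[simp] lemma nx_nx (x : α × Bool) : nx (nx x) = x := by simp [nx]

@[simp] lemma bp_nil : bp ([] : List (FreeGroup α × List (α × Bool))) = 1 := rfl
@[simp] lemma bp_cons (p) (L : List (FreeGroup α × List (α × Bool))) :
    bp (p :: L) = p.1⁻¹ * FreeGroup.mk p.2 * p.1 * bp L := by simp [bp]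
@[simp] lemma bp_append (L M : List (FreeGroup α × List (α × Bool))) :
    bp (L ++ M) = bp L * bp M := by simp [bp]
@[simp] lemma tot_nil : tot ([] : List (FreeGroup α × List (α × Bool))) = 0 := rfl
@[simp] lemma tot_cons (p) (L : List (FreeGroup α × List (α × Bool))) :
    tot (p :: L) = p.1.norm + 1 + tot L := by simp [tot]
@[simp] lemma tot_append (L M : List (FreeGroup α × List (α × Bool))) :
    tot (L ++ M) = tot L + tot M := by simp [tot]
@[simp] lemma InR_nil (Rs : Set (List (α × Bool))) : InR Rs [] := by simp [InR]
@[simp] lemma InR_cons (Rs : Set (List (α × Bool))) (p L) :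
    InR Rs (p :: L) ↔ p.2 ∈ Rs ∧ InR Rs L := by simp [InR]
@[simp] lemma InR_append (Rs : Set (List (α × Bool))) (L M) :
    InR Rs (L ++ M) ↔ InR Rs L ∧ InR Rs M := by simp [InR, or_imp, forall_and]

/-- conjugated list -/
def conjL (g : FreeGroup α) (L : List (FreeGroup α × List (α × Bool))) :
    List (FreeGroup α × List (α × Bool)) := L.map fun p => (p.1 * g, p.2)

/-- inverse list -/
def invL (L : List (FreeGroup α × List (α × Bool))) :
    List (FreeGroup α × List (α × Bool)) := (L.map fun p => (p.1, invRev p.2)).reverse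

lemma bp_conjL (g : FreeGroup α) (L) : bp (conjL g L) = g⁻¹ * bp L * g := by
  induction L with
  | nil => simp [conjL]
  | cons p L ih =>
    have : conjL g (p :: L) = (p.1 * g, p.2) :: conjL g L := rfl
    rw [this, bp_cons, ih, bp_cons]; group
lemma InR_conjL {Rs : Set (List (α × Bool))} (g : FreeGroup α) {L} (h : InR Rs L) :
    InR Rs (conjL g L) := by
  intro p hp
  simp only [conjL, List.mem_map] at hp
  obtain ⟨q, hq, rfl⟩ := hp
  exact h q hq
@[simp] lemma length_conjL (g : FreeGroup α) (L) : (conjL g L).length = L.length := by simp [conjL]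
@[simp] lemma length_invL (L : List (FreeGroup α × List (α × Bool))) :
  (invL L).length = L.length := by simp [invL]
lemma bp_invL (L : List (FreeGroup α × List (α × Bool))) : bp (invL L) = (bp L)⁻¹ := by
  induction L with
  | nil => simp [invL]
  | cons p L ih =>
    have : invL (p :: L) = invL L ++ [(p.1, invRev p.2)] := by simp [invL]
    rw [this, bp_append, ih, bp_cons, bp_cons, bp_nil, ← inv_mk]; group
lemma tot_invL (L : List (FreeGroup α × List (α × Bool))) : tot (invL L) = tot L := by
  induction L with
  | nil => simp [invL]
  | cons p L ih =>
    have : invL (p :: L) = invL L ++ [(p.1, invRev p.2)] := by simp [invL]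
    rw [this, tot_append, ih]; simp; omega
lemma InR_invL {Rs : Set (List (α × Bool))} (h : ∀ r ∈ Rs, invRev r ∈ Rs) {L} (hL : InR Rs L) :
    InR Rs (invL L) := by
  intro p hp
  simp only [invL, List.mem_reverse, List.mem_map] at hp
  obtain ⟨q, hq, rfl⟩ := hp
  exact h _ (hL q hq)

lemma ALe.mono {Rs : Set (List (α × Bool))} {w n m} (h : ALe Rs w n) (hm : n ≤ m) : ALe Rs w m := by
  obtain ⟨L, h1, h2⟩ := h; exact ⟨L, h1.trans hm, h2⟩
lemma ALe.mul {Rs : Set (List (α × Bool))} {w v n m} (h : ALe Rs w n) (h' : ALe Rs v m) :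
    ALe Rs (w * v) (n + m) := by
  obtain ⟨L, h1, h2, rfl⟩ := h
  obtain ⟨M, h3, h4, rfl⟩ := h'
  exact ⟨L ++ M, by simp; omega, by simp [h2, h4], by simp⟩
lemma ALe.conj {Rs : Set (List (α × Bool))} {w n} (h : ALe Rs w n) (g) :
    ALe Rs (g⁻¹ * w * g) n := by
  obtain ⟨L, h1, h2, rfl⟩ := h
  exact ⟨conjL g L, by simp [h1], InR_conjL g h2, (bp_conjL g L).symm⟩
lemma ALe.inv {Rs : Set (List (α × Bool))} (hR : ∀ r ∈ Rs, invRev r ∈ Rs) {w n}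
    (h : ALe Rs w n) : ALe Rs w⁻¹ n := by
  obtain ⟨L, h1, h2, rfl⟩ := h
  exact ⟨invL L, by simp [h1], InR_invL hR h2, (bp_invL L).symm⟩
lemma ALe.one {Rs : Set (List (α × Bool))} {n} : ALe Rs (1 : FreeGroup α) n := ⟨[], by simp, by simp, by simp⟩
lemma ALe.zero {Rs : Set (List (α × Bool))} {w} (h : ALe Rs w 0) : w = 1 := by
  obtain ⟨L, h1, h2, rfl⟩ := h
  rw [List.length_eq_zero_iff.1 (Nat.le_zero.1 h1)]; rfl
lemma ALe.rel {Rs : Set (List (α × Bool))} {r} (h : r ∈ Rs) : ALe Rs (FreeGroup.mk r) 1 :=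
  ⟨[(1, r)], by simp, by simpa using h, by simp⟩
/-- conjugation form: `u*v` has area ≤ n iff `v*u` has. -/
lemma ALe.swap {Rs : Set (List (α × Bool))} {u v n} (h : ALe Rs (u * v) n) : ALe Rs (v * u) n := by
  have := h.conj u; convert this using 1; group
lemma ALe.hom {Rs : Set (List (α × Bool))} {Q : Type*} [Group Q] (ψ : FreeGroup α →* Q)
    (hψ : ∀ r ∈ Rs, ψ (FreeGroup.mk r) = 1) {w n} (h : ALe Rs w n) : ψ w = 1 := by
  obtain ⟨L, h1, h2, rfl⟩ := h
  clear h1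
  induction L with
  | nil => simp
  | cons p L ih => simp at h2; simp [ih h2.2, hψ _ h2.1]

lemma ALe_of_mem {Rs : Set (List (α × Bool))} (hR : ∀ r ∈ Rs, invRev r ∈ Rs) {w}
    (h : w ∈ Subgroup.normalClosure (FreeGroup.mk '' Rs)) : ∃ n, ALe Rs w n := by
  refine Subgroup.closure_induction (p := fun w _ => ∃ n, ALe Rs w n) ?_ ?_ ?_ ?_ h
  · intro x hx
    rw [Group.mem_conjugatesOfSet_iff] at hx
    obtain ⟨_, ⟨r, hr, rfl⟩, hc⟩ := hx
    obtain ⟨c, rfl⟩ := isConj_iff.1 hc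
    exact ⟨1, by simpa [-mul_mk, -inv_mk] using (ALe.rel hr).conj c⁻¹⟩
  · exact ⟨0, ALe.one⟩
  · rintro x y _ _ ⟨n, h⟩ ⟨m, h'⟩; exact ⟨_, h.mul h'⟩
  · rintro x _ ⟨n, h⟩; exact ⟨n, h.inv hR⟩

lemma mem_of_ALe {Rs : Set (List (α × Bool))} {w n}
    (h : ALe Rs w n) : w ∈ Subgroup.normalClosure (FreeGroup.mk '' Rs) := by
  have := h.hom (QuotientGroup.mk' (Subgroup.normalClosure (FreeGroup.mk '' Rs))) (fun r hr => by
    rw [QuotientGroup.mk'_apply, QuotientGroup.eq_one_iff]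
    exact Subgroup.subset_normalClosure ⟨r, hr, rfl⟩)
  rwa [QuotientGroup.mk'_apply, QuotientGroup.eq_one_iff] at this

lemma mk_nx (x : α × Bool) : FreeGroup.mk [nx x] = (FreeGroup.mk [x])⁻¹ := by
  simp [inv_mk, invRev, nx]
lemma mk_cons' (x : α × Bool) (l) : FreeGroup.mk (x :: l) = FreeGroup.mk [x] * FreeGroup.mk l := by
  simp [mul_mk]
lemma mk_app (u v : List (α × Bool)) : FreeGroup.mk (u ++ v) = FreeGroup.mk u * FreeGroup.mk v := by
  simp [mul_mk]
lemma mk_invRev (u : List (α × Bool)) : FreeGroup.mk (invRev u) = (FreeGroup.mk u)⁻¹ := by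
  simp [inv_mk]
lemma mk_nil' : FreeGroup.mk ([] : List (α × Bool)) = 1 := rfl

lemma red_uniq {u v : List (α × Bool)} (hu : FreeGroup.IsReduced u) (hv : FreeGroup.IsReduced v)
    (h : FreeGroup.mk u = FreeGroup.mk v) : u = v := by
  have := congrArg FreeGroup.toWord h
  rwa [toWord_mk, toWord_mk, hu.reduce_eq, hv.reduce_eq] at this

lemma red_app {u v : List (α × Bool)} : FreeGroup.IsReduced (u ++ v) ↔ FreeGroup.IsReduced u ∧ FreeGroup.IsReduced v ∧
    ∀ x ∈ u.getLast?, ∀ y ∈ v.head?, y ≠ nx x := by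
  unfold FreeGroup.IsReduced
  rw [List.isChain_append]
  refine and_congr_right fun _ => and_congr_right fun _ => forall₄_congr fun x _ y _ => ?_
  rcases x with ⟨a, b⟩; rcases y with ⟨c, d⟩
  simp [nx]
  constructor
  · intro h h1; have := h h1.symm; subst this; cases b <;> simp
  · intro h h1; have := h h1.symm; cases b <;> cases d <;> simp_all

lemma find_first : ∀ n, ∀ W : List (α × Bool), W.length ≤ n → ∀ x v, reduce W = x :: v →
    ∃ P Q, W = P ++ x :: Q ∧ FreeGroup.mk P = 1 ∧ FreeGroup.mk Q = FreeGroup.mk v := by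
  intro n
  induction n with
  | zero =>
    intro W h x v hW
    rw [List.length_eq_zero_iff.1 (Nat.le_zero.1 h)] at hW; simp at hW
  | succ n ih =>
    intro W h x v hW
    rcases W with _ | ⟨y, W'⟩
    · simp at hW
    simp at h
    rw [reduce.cons] at hW
    rcases hr : reduce W' with _ | ⟨z, zs⟩
    · rw [hr] at hW
      simp at hW
      obtain ⟨rfl, rfl⟩ := hW
      exact ⟨[], W', rfl, rfl, by rw [← hr, reduce.self]⟩
    · rw [hr] at hW
      simp only at hW
      split_ifs at hW with hc
      · obtain ⟨P, Q, rfl, hP, hQ⟩ := ih W' h z zs hr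
        have hQ' : reduce Q = x :: v := by
          rw [← hW, reduce.sound hQ]
          have : FreeGroup.IsReduced (z :: zs) := by rw [← hr]; exact isReduced_iff_reduce_eq.2 reduce.idem
          exact (this.subword (List.suffix_cons z zs).isInfix).reduce_eq
        simp at h
        obtain ⟨P', Q', rfl, hP', hQ'⟩ := ih Q (by omega) x v hQ'
        refine ⟨y :: P ++ z :: P', Q', by simp, ?_, hQ'⟩
        have hy : y = nx z := by ext <;> simp [nx, hc.1, hc.2]
        rw [mk_app, mk_cons', mk_cons' z, hP, hP', hy, mk_nx]; group
      · simp at hW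
        obtain ⟨rfl, rfl⟩ := hW
        exact ⟨[], W', rfl, rfl, by rw [← hr, reduce.self]⟩

/-- word of a block -/
def blk (p : FreeGroup α × List (α × Bool)) : List (α × Bool) :=
  invRev p.1.toWord ++ (p.2 ++ p.1.toWord)

lemma mk_blk (p : FreeGroup α × List (α × Bool)) :
    FreeGroup.mk (blk p) = p.1⁻¹ * FreeGroup.mk p.2 * p.1 := by
  rw [blk, mk_app, mk_app, mk_invRev, mk_toWord, mul_assoc]

lemma mk_flat (L : List (FreeGroup α × List (α × Bool))) :
    FreeGroup.mk (L.map blk).flatten = bp L := by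
  induction L with
  | nil => rfl
  | cons p L ih => rw [List.map_cons, List.flatten_cons, mk_app, ih, mk_blk, bp_cons]

lemma split_app {β : Type*} {u v P Q : List β} {x : β} (h : u ++ v = P ++ x :: Q) :
    (∃ b, u = P ++ x :: b ∧ Q = b ++ v) ∨ (∃ a, P = u ++ a ∧ v = a ++ x :: Q) := by
  rcases List.append_eq_append_iff.1 h with ⟨a, h1, h2⟩ | ⟨c, h1, h2⟩
  · exact Or.inr ⟨a, h1, h2⟩
  · rcases c with _ | ⟨c, cs⟩
    · exact Or.inr ⟨[], by simpa using h1.symm, by simpa using h2.symm⟩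
    · simp at h2; obtain ⟨rfl, rfl⟩ := h2
      exact Or.inl ⟨cs, h1, rfl⟩

lemma locate (L : List (FreeGroup α × List (α × Bool))) : ∀ P x Q,
    (L.map blk).flatten = P ++ x :: Q → ∃ L1 p L2 a b, L = L1 ++ p :: L2 ∧ blk p = a ++ x :: b ∧
      FreeGroup.mk P = bp L1 * FreeGroup.mk a ∧ FreeGroup.mk Q = FreeGroup.mk b * bp L2 := by
  induction L with
  | nil => intro P x Q h; simp at h
  | cons p L ih =>
    intro P x Q h
    rw [List.map_cons, List.flatten_cons] at h
    rcases split_app h with ⟨b, h1, h2⟩ | ⟨a, h1, h2⟩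
    · exact ⟨[], p, L, P, b, rfl, h1, by simp, by rw [h2, mk_app, mk_flat]⟩
    · obtain ⟨L1, q, L2, a', b, rfl, h4, h5, h6⟩ := ih a x Q h2
      exact ⟨p :: L1, q, L2, a', b, rfl, h4, by rw [h1, mk_app, h5, mk_blk, bp_cons]; group, h6⟩

/-- First alternative -/
def F1 (Rs : Set (List (α × Bool))) (x : α × Bool) (v : List (α × Bool)) (n : ℕ) : Prop :=
  ∃ s, x :: s ∈ Rs ∧ ∃ n', n' + 1 ≤ n ∧ ALe Rs ((FreeGroup.mk s)⁻¹ * FreeGroup.mk v) n'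

/-- Second alternative -/
def F2 (Rs : Set (List (α × Bool))) (x : α × Bool) (v : List (α × Bool)) (n t : ℕ) : Prop :=
  ∃ Z B LZ LB, v = Z ++ nx x :: B ∧ InR Rs LZ ∧ InR Rs LB ∧ FreeGroup.mk Z = bp LZ ∧
    FreeGroup.mk B = bp LB ∧ LZ.length + LB.length ≤ n ∧ tot LZ + tot LB ≤ t

lemma F1.mono {Rs : Set (List (α × Bool))} {x v n m} (h : F1 Rs x v n) (hm : n ≤ m) : F1 Rs x v m := by
  obtain ⟨s, h1, n', h2, h3⟩ := h; exact ⟨s, h1, n', h2.trans hm, h3⟩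
lemma F2.mono {Rs : Set (List (α × Bool))} {x v n t m t'} (h : F2 Rs x v n t) (hm : n ≤ m)
    (ht : t ≤ t') : F2 Rs x v m t' := by
  obtain ⟨Z, B, LZ, LB, h1, h2, h3, h4, h5, h6, h7⟩ := h
  exact ⟨Z, B, LZ, LB, h1, h2, h3, h4, h5, h6.trans hm, h7.trans ht⟩

lemma pairLemma {Rs : Set (List (α × Bool))} (hSC : SC Rs) (T : ℕ)
    (hF : ∀ L, tot L < T → InR Rs L → ∀ x v, FreeGroup.IsReduced (x :: v) → FreeGroup.mk (x :: v) = bp L →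
      F1 Rs x v L.length ∨ ∃ t, t < tot L ∧ F2 Rs x v L.length t) :
    ∀ S, ∀ LZ LB, tot LZ + tot LB ≤ S → S < T → InR Rs LZ → InR Rs LB → ∀ x v, FreeGroup.IsReduced (x :: v) →
      FreeGroup.mk v = bp LZ * (FreeGroup.mk [x])⁻¹ * bp LB →
      F1 Rs x v (LZ.length + LB.length) ∨ F2 Rs x v (LZ.length + LB.length) (tot LZ + tot LB) := by
  intro S
  induction S using Nat.strong_induction_on with
  | _ S ih =>
  intro LZ LB hS hT hZ hB x v hred hv
  by_cases hbx : ∃ b, (bp LB).toWord = x :: b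
  · obtain ⟨b, hb⟩ := hbx
    have hb1 : FreeGroup.mk (x :: b) = bp LB := by rw [← hb, mk_toWord]
    have hvb : FreeGroup.mk v = bp LZ * FreeGroup.mk b := by
      rw [hv, ← hb1, mk_cons' x b]; group
    rcases hF LB (by omega) hB x b (hb ▸ isReduced_toWord) hb1 with
      ⟨s, hs, n', hn', hA⟩ | ⟨t, ht, Z2, B2, LZ2, LB2, e1, e2, e3, e4, e5, e6, e7⟩
    · left
      refine ⟨s, hs, LZ.length + n', by omega, ?_⟩
      have h1 : ALe Rs (bp LZ) LZ.length := ⟨LZ, le_rfl, hZ, rfl⟩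
      have := (h1.conj (FreeGroup.mk s)).mul hA
      rw [hvb]; convert this using 1; group
    · rcases ih (tot LZ + tot LZ2 + tot LB2) (by omega) (LZ ++ LZ2) LB2 (by simp) (by omega)
        (by simp [hZ, e2]) e3 x v hred (by
          rw [hvb, e1, mk_app, mk_cons', mk_nx, bp_append, e4, e5]; group) with h | h
      · left; exact h.mono (by simp; omega)
      · right; exact h.mono (by simp; omega) (by simp; omega)
  by_cases hzx : ∃ b, (bp LZ)⁻¹.toWord = nx x :: b
  · obtain ⟨b, hb⟩ := hzx
    have hb1 : FreeGroup.mk (nx x :: b) = bp (invL LZ) := by rw [← hb, mk_toWord, bp_invL]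
    have hb2 : bp LZ = (FreeGroup.mk b)⁻¹ * FreeGroup.mk [x] := by
      rw [bp_invL, mk_cons', mk_nx] at hb1
      rw [← inv_inv (bp LZ), ← hb1]; group
    have hvb : FreeGroup.mk v = (FreeGroup.mk b)⁻¹ * bp LB := by
      rw [hv, hb2]; group
    rcases hF (invL LZ) (by rw [tot_invL]; omega) (InR_invL hSC.inv hZ) (nx x) b
      (hb ▸ isReduced_toWord) hb1 with
      ⟨s, hs, n', hn', hA⟩ | ⟨t, ht, Z2, B2, LZ2, LB2, e1, e2, e3, e4, e5, e6, e7⟩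
    · left
      refine ⟨invRev s, ?_, n' + LB.length, by simp at hn'; omega, ?_⟩
      · have h1 := hSC.inv _ hs
        have h2 : invRev (nx x :: s) = invRev s ++ [x] := by
          simp [invRev, nx]
        rw [h2] at h1
        exact hSC.rot _ _ h1
      · have h1 : ALe Rs (bp LB) LB.length := ⟨LB, le_rfl, hB, rfl⟩
        have h2 := (hA.inv hSC.inv).conj ((FreeGroup.mk s)⁻¹)
        have := h2.mul h1
        rw [hvb, mk_invRev]; convert this using 1; group
    · rw [length_invL] at e6
      rw [tot_invL] at ht
      rcases ih (tot LB2 + (tot LZ2 + tot LB)) (by omega) (invL LB2) (invL LZ2 ++ LB)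
        (by simp [tot_invL]) (by omega)
        (InR_invL hSC.inv e3) (by simp [hB, InR_invL hSC.inv e2]) x v hred (by
          rw [hvb, e1, mk_app, mk_cons', mk_nx, mk_nx, bp_append, e4, e5, bp_invL, bp_invL]; group) with h | h
      · left; exact h.mono (by simp; omega)
      · right; exact h.mono (by simp; omega) (by simp [tot_invL]; omega)
  right
  refine ⟨(bp LZ).toWord, (bp LB).toWord, LZ, LB, ?_, hZ, hB, mk_toWord, mk_toWord, le_rfl, le_rfl⟩
  refine red_uniq (hred.subword (List.suffix_cons x v).isInfix) ?_ ?_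
  · rw [red_app]
    refine ⟨isReduced_toWord, ?_, ?_⟩
    · have : nx x :: (bp LB).toWord = [nx x] ++ (bp LB).toWord := rfl
      rw [this, red_app]
      refine ⟨by simp [FreeGroup.IsReduced], isReduced_toWord, ?_⟩
      intro y hy z hz
      simp at hy; subst hy
      rintro rfl
      rw [nx_nx] at hz
      apply hbx
      rw [Option.mem_def, List.head?_eq_some_iff] at hz
      exact hz
    · intro y hy z hz
      simp at hz; subst hz
      intro h
      apply hzx
      rw [Option.mem_def, List.getLast?_eq_some_iff] at hy
      obtain ⟨ys, hys⟩ := hy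
      have : y = x := by rw [← nx_nx x, h, nx_nx]
      subst this
      refine ⟨invRev ys, ?_⟩
      rw [toWord_inv, hys]; simp [invRev, nx]
  · rw [mk_app, mk_cons', mk_toWord, mk_toWord, mk_nx, hv]; group

lemma lemmaF {Rs : Set (List (α × Bool))} (hSC : SC Rs) : ∀ T,
    ∀ L, tot L = T → InR Rs L → ∀ x v, FreeGroup.IsReduced (x :: v) → FreeGroup.mk (x :: v) = bp L →
      F1 Rs x v L.length ∨ ∃ t, t < tot L ∧ F2 Rs x v L.length t := by
  intro T
  induction T using Nat.strong_induction_on with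
  | _ T ih =>
  intro L hT hL x v hred hw
  have hW : reduce (L.map blk).flatten = x :: v := by
    rw [← hred.reduce_eq]; apply reduce.sound; rw [mk_flat, hw]
  obtain ⟨P, Q, hPQ, hP, hQ⟩ := find_first _ _ le_rfl x v hW
  obtain ⟨L1, ⟨f, r⟩, L2, a, b, rfl, hb, hP', hQ'⟩ := locate L P x Q hPQ
  rw [hP] at hP'
  rw [hQ] at hQ'
  simp at hL
  obtain ⟨hL1, hr, hL2⟩ := hL
  simp only [blk] at hb
  have use : ∀ g : FreeGroup α, g.norm < f.norm →
      FreeGroup.mk (x :: v) = g⁻¹ * FreeGroup.mk r * g * bp L1 * bp L2 →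
      F1 Rs x v (L1 ++ (f, r) :: L2).length ∨
        ∃ t, t < tot (L1 ++ (f, r) :: L2) ∧ F2 Rs x v (L1 ++ (f, r) :: L2).length t := by
    intro g hg he
    rcases ih (tot ((g, r) :: (L1 ++ L2))) (by rw [← hT]; simp; omega) _ rfl (by simp [hr, hL1, hL2])
      x v hred (by rw [he]; simp [mul_assoc]) with h | ⟨t, ht, h⟩
    · left; exact h.mono (by simp)
    · right; exact ⟨t, by simp at ht ⊢; omega, h.mono (by simp) le_rfl⟩
  rcases split_app hb with ⟨k, h1, h2⟩ | ⟨a', h1, h2⟩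
  · -- in f⁻¹
    have hf : f = (FreeGroup.mk a * FreeGroup.mk [x] * FreeGroup.mk k)⁻¹ := by
      have := congrArg FreeGroup.mk h1
      rw [mk_invRev, mk_toWord, mk_app, mk_cons'] at this
      rw [mul_assoc, ← this, inv_inv]
    have hlen : f.norm = a.length + 1 + k.length := by
      have := congrArg List.length h1
      rw [invRev_length] at this
      rw [FreeGroup.norm, this]; simp; try omega
    have hA : bp L1 = (FreeGroup.mk a)⁻¹ := eq_inv_of_mul_eq_one_left hP'.symm
    have hv : FreeGroup.mk v = FreeGroup.mk k * FreeGroup.mk r * f * bp L2 := by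
      rw [hQ', h2, mk_app, mk_app, mk_toWord]; group
    by_cases ha : a = []
    · subst ha
      rw [mk_nil'] at hf hA
      by_cases hL1' : L1 = []
      · subst hL1'
        have hk : (FreeGroup.mk k)⁻¹.norm ≤ k.length := by rw [norm_inv_eq]; exact norm_mk_le
        rcases pairLemma hSC T (fun L hL => ih (tot L) hL L rfl) (tot [((FreeGroup.mk k)⁻¹, r)] + tot L2)
          [((FreeGroup.mk k)⁻¹, r)] L2 le_rfl (by rw [← hT]; simp at hlen hk ⊢; omega) (by simpa using hr)
          hL2 x v hred (by rw [hv, hf, bp_cons, bp_nil]; group) with h | h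
        · left; exact h.mono (by simp; omega)
        · right; refine ⟨_, ?_, h.mono (by simp; omega) le_rfl⟩
          simp at hlen hk ⊢; omega
      · obtain ⟨p, L1', rfl⟩ := List.exists_cons_of_ne_nil hL1'
        rcases ih (tot ((f, r) :: L2)) (by rw [← hT]; simp; omega) _ rfl (by simp [hr, hL2])
          x v hred (by rw [hw, bp_append, hA]; simp) with h | ⟨t, ht, h⟩
        · left; exact h.mono (by simp; omega)
        · right; exact ⟨t, by simp at ht ⊢; omega, h.mono (by simp; omega) le_rfl⟩
    · apply use ((FreeGroup.mk [x] * FreeGroup.mk k)⁻¹)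
      · have : 0 < a.length := List.length_pos_iff.2 ha
        have h3 : (FreeGroup.mk [x] * FreeGroup.mk k)⁻¹.norm ≤ 1 + k.length := by
          rw [norm_inv_eq, ← mk_cons']; refine norm_mk_le.trans (by simp)
        omega
      · rw [mk_cons', hv, hA, hf]; group
  rcases split_app h2 with ⟨s, h3, h4⟩ | ⟨g, h3, h4⟩
  · -- in r
    left
    have hrel : x :: s ++ a' ∈ Rs := hSC.rot a' (x :: s) (h3 ▸ hr)
    refine ⟨s ++ a', hrel, L1.length + L2.length, by simp, L1 ++ L2, by simp, by simp [hL1, hL2], ?_⟩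
    rw [h1, mk_app, mk_invRev, mk_toWord] at hP'
    have hA : bp L1 = (f⁻¹ * FreeGroup.mk a')⁻¹ := eq_inv_of_mul_eq_one_left hP'.symm
    rw [bp_append, hA, hQ', h4, mk_app, mk_app, mk_toWord]; group
  · -- in f
    have hf : f = FreeGroup.mk g * FreeGroup.mk [x] * FreeGroup.mk b := by
      have := congrArg FreeGroup.mk h4
      rwa [mk_toWord, mk_app, mk_cons', ← mul_assoc] at this
    have hlen : f.norm = g.length + 1 + b.length := by
      rw [FreeGroup.norm, h4]; simp; omega
    apply use (FreeGroup.mk g)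
    · have h3 : (FreeGroup.mk g).norm ≤ g.length := norm_mk_le
      omega
    · rw [h1, h3, mk_app, mk_app, mk_invRev, mk_toWord] at hP'
      have hA : bp L1 = (f⁻¹ * (FreeGroup.mk r * FreeGroup.mk g))⁻¹ := eq_inv_of_mul_eq_one_left hP'.symm
      rw [mk_cons', hQ', hA, hf]; group

end basics
set_option linter.unusedSectionVars false
set_option linter.style.longLine false
section state
variable {α : Type*} [DecidableEq α] {Q : Type*} [Group Q]
open FreeGroup

/-- boundary edge tags -/
structure Tag (α Q I : Type*) where
  p : Q
  l : α × Bool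
  tl : List (α × Bool)
  id : I
  brk : Bool

/-- boundary word -/
def wd {I : Type} (T : List (Tag α Q I)) : List (α × Bool) := T.map Tag.l

@[simp] lemma wd_nil {I : Type} : wd ([] : List (Tag α Q I)) = [] := rfl
@[simp] lemma wd_cons {I : Type} (a) (T : List (Tag α Q I)) : wd (a :: T) = a.l :: wd T := rfl
@[simp] lemma wd_append {I : Type} (S T : List (Tag α Q I)) : wd (S ++ T) = wd S ++ wd T := by simp [wd]
@[simp] lemma wd_length {I : Type} (T : List (Tag α Q I)) : (wd T).length = T.length := by simp [wd]

/-- successor relation on tags -/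
def Sc {I : Type} (ψ : FreeGroup α →* Q) (a b : Tag α Q I) : Prop :=
  b.p = a.p * ψ (FreeGroup.mk [a.l]) ∧ (b.brk = false → b.id = a.id ∧ b.l :: b.tl = a.tl ++ [a.l])

/-- cyclic chains -/
def Cyc {β : Type*} (r : β → β → Prop) (L : List β) : Prop :=
  L.IsChain r ∧ ∀ x ∈ L.getLast?, ∀ y ∈ L.head?, r x y

lemma Cyc_append {β : Type*} {r : β → β → Prop} {A B : List β} (hA : A ≠ []) (hB : B ≠ []) :
    Cyc r (A ++ B) ↔ A.IsChain r ∧ B.IsChain r ∧ (∀ x ∈ A.getLast?, ∀ y ∈ B.head?, r x y) ∧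
      ∀ x ∈ B.getLast?, ∀ y ∈ A.head?, r x y := by
  unfold Cyc
  rw [List.isChain_append, List.getLast?_append_of_ne_nil _ hB, List.head?_append_of_ne_nil _ hA]
  tauto

lemma Cyc_rot {β : Type*} {r : β → β → Prop} {A B : List β} (h : Cyc r (A ++ B)) : Cyc r (B ++ A) := by
  by_cases hA : A = []
  · subst hA; simpa using h
  by_cases hB : B = []
  · subst hB; simpa using h
  rw [Cyc_append hA hB] at h
  rw [Cyc_append hB hA]; tauto

/-- sum of θ along a path -/
def pathSum (ψ : FreeGroup α →* Q) (θ : Q → α × Bool → ℤ) : Q → List (α × Bool) → ℤ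
  | _, [] => 0
  | g, x :: r => θ g x + pathSum ψ θ (g * ψ (FreeGroup.mk [x])) r

/-- antisymmetry -/
def AS (ψ : FreeGroup α →* Q) (θ : Q → α × Bool → ℤ) : Prop :=
  ∀ p x, θ (p * ψ (FreeGroup.mk [x])) (nx x) = - θ p x

lemma pathSum_append (ψ : FreeGroup α →* Q) (θ : Q → α × Bool → ℤ) (u v) : ∀ g,
    pathSum ψ θ g (u ++ v) = pathSum ψ θ g u + pathSum ψ θ (g * ψ (FreeGroup.mk u)) v := by
  induction u with
  | nil => intro g; simp [pathSum, mk_nil', -mul_mk]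
  | cons x u ih =>
    intro g
    rw [List.cons_append, pathSum, ih, pathSum, mk_cons' x u, _root_.map_mul, mul_assoc]; ring

lemma invRev_cons' (x : α × Bool) (u) : invRev (x :: u) = invRev u ++ [nx x] := by simp [invRev, nx]

lemma pathSum_inv (ψ : FreeGroup α →* Q) {θ : Q → α × Bool → ℤ} (hθ : AS ψ θ) (u) : ∀ g,
    pathSum ψ θ (g * ψ (FreeGroup.mk u)) (invRev u) = - pathSum ψ θ g u := by
  induction u with
  | nil => intro g; simp [pathSum]
  | cons x u ih =>
    intro g
    rw [invRev_cons', pathSum_append, pathSum, pathSum, pathSum, mk_cons' x u, _root_.map_mul, ← mul_assoc, ih,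
      mk_invRev, _root_.map_inv, mul_inv_cancel_right, hθ]
    ring

lemma chain_sum {I : Type} (ψ : FreeGroup α →* Q) (θ : Q → α × Bool → ℤ) : ∀ (T : List (Tag α Q I)) (g : Q),
    T.IsChain (Sc ψ) → (∀ a ∈ T.head?, a.p = g) →
    (T.map fun a => θ a.p a.l).sum = pathSum ψ θ g (wd T) := by
  intro T
  induction T with
  | nil => intro g _ _; rfl
  | cons a T ih =>
    intro g h1 h2
    have hg : a.p = g := h2 a (by simp)
    rw [List.map_cons, List.sum_cons, wd_cons, pathSum, hg]
    congr 1
    rw [List.isChain_cons] at h1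
    apply ih _ h1.2
    intro b hb
    rw [(h1.1 b hb).1, hg]

lemma chain_end {I : Type} (ψ : FreeGroup α →* Q) : ∀ (T : List (Tag α Q I)) (b : Tag α Q I) (g : Q),
    (T ++ [b]).IsChain (Sc ψ) → (∀ a ∈ (T ++ [b]).head?, a.p = g) → b.p = g * ψ (FreeGroup.mk (wd T)) := by
  intro T
  induction T with
  | nil => intro b g _ h; simpa [mk_nil'] using h b
  | cons a T ih =>
    intro b g h1 h2
    have hg : a.p = g := h2 a (by simp)
    rw [List.cons_append, List.isChain_cons] at h1
    rw [ih b (g * ψ (FreeGroup.mk [a.l])) h1.2, wd_cons, mk_cons' a.l (wd T), _root_.map_mul, mul_assoc]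
    intro c hc; rw [(h1.1 c hc).1, hg]

section counts
variable {I : Type} [DecidableEq I]
/-- number of edges of the cell c -/
def idc (c : I) (T : List (Tag α Q I)) : ℕ := T.countP fun a => decide (a.id = c)
/-- number of run starts of the cell c -/
def bc (c : I) (T : List (Tag α Q I)) : ℕ := T.countP fun a => a.brk && decide (a.id = c)
/-- number of run starts -/
def bk {I : Type} (T : List (Tag α Q I)) : ℕ := T.countP fun a => a.brk

@[simp] lemma idc_append (c : I) (S T : List (Tag α Q I)) : idc c (S ++ T) = idc c S + idc c T := by simp [idc]
@[simp] lemma bc_append (c : I) (S T : List (Tag α Q I)) : bc c (S ++ T) = bc c S + bc c T := by simp [bc]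
@[simp] lemma bk_append {I : Type} (S T : List (Tag α Q I)) : bk (S ++ T) = bk S + bk T := by simp [bk]
lemma idc_cons (c : I) (a) (T : List (Tag α Q I)) : idc c (a :: T) = (if a.id = c then 1 else 0) + idc c T := by
  simp [idc, List.countP_cons]; omega
lemma bc_cons (c : I) (a) (T : List (Tag α Q I)) :
    bc c (a :: T) = (if a.brk = true ∧ a.id = c then 1 else 0) + bc c T := by
  simp [bc, List.countP_cons]; omega
lemma bk_cons {I : Type} (a) (T : List (Tag α Q I)) :
    bk (a :: T) = (if a.brk = true then 1 else 0) + bk T := by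
  simp [bk, List.countP_cons]; omega
@[simp] lemma idc_nil (c : I) : idc c ([] : List (Tag α Q I)) = 0 := rfl
@[simp] lemma bc_nil (c : I) : bc c ([] : List (Tag α Q I)) = 0 := rfl
@[simp] lemma bk_nil {I : Type} : bk ([] : List (Tag α Q I)) = 0 := rfl

lemma sum_bc [Fintype I] (T : List (Tag α Q I)) : ∑ c, bc c T = bk T := by
  induction T with
  | nil => simp
  | cons a T ih =>
    simp only [bc_cons, bk_cons, Finset.sum_add_distrib, ih]
    congr 1
    by_cases h : a.brk <;> simp [h]

/-- set the first break flag -/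
def flagH {I : Type} : List (Tag α Q I) → List (Tag α Q I)
  | [] => []
  | a :: T => { a with brk := true } :: T

/-- relabel ids -/
def Tag.mp {I J : Type} (f : I → J) (a : Tag α Q I) : Tag α Q J := ⟨a.p, a.l, a.tl, f a.id, a.brk⟩

lemma bk_flagH {I : Type} (T : List (Tag α Q I)) : bk (flagH T) ≤ bk T + 1 := by
  cases T <;> simp [flagH, bk_cons]; omega
lemma idc_flagH (c : I) (T : List (Tag α Q I)) : idc c (flagH T) = idc c T := by
  cases T <;> simp [flagH, idc_cons]
lemma wd_flagH {I : Type} (T : List (Tag α Q I)) : wd (flagH T) = wd T := by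
  cases T <;> simp [flagH]
lemma length_flagH {I : Type} (T : List (Tag α Q I)) : (flagH T).length = T.length := by
  cases T <;> simp [flagH]
lemma bc_flagH (c : I) (T : List (Tag α Q I)) : bc c (flagH T) ≤ bc c T +
    if (∃ a ∈ T.head?, a.brk = false ∧ a.id = c) then 1 else 0 := by
  cases T with
  | nil => simp [flagH]
  | cons a T =>
    by_cases h : a.brk <;> simp [flagH, bc_cons, h]; omega

/-- embed -/
def emb {I J : Type} (f : I → J) (T : List (Tag α Q I)) : List (Tag α Q J) := (flagH T).map (Tag.mp f)

lemma wd_emb {I J : Type} (f : I → J) (T : List (Tag α Q I)) : wd (emb f T) = wd T := by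
  rw [← wd_flagH T]; simp [wd, emb, Tag.mp, Function.comp_def]
lemma bk_emb {I J : Type} (f : I → J) (T : List (Tag α Q I)) : bk (emb f T) = bk (flagH T) := by
  simp [bk, emb, Tag.mp, List.countP_map, Function.comp_def]
lemma idc_emb {J : Type} [DecidableEq J] {f : I → J} (hf : Injective f) (c : I) (T : List (Tag α Q I)) :
    idc (f c) (emb f T) = idc c T := by
  rw [← idc_flagH c T]; simp [idc, emb, Tag.mp, List.countP_map, Function.comp_def, hf.eq_iff]
lemma bc_emb {J : Type} [DecidableEq J] {f : I → J} (hf : Injective f) (c : I) (T : List (Tag α Q I)) :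
    bc (f c) (emb f T) = bc c (flagH T) := by
  simp [bc, emb, Tag.mp, List.countP_map, Function.comp_def, hf.eq_iff]
lemma idc_emb_ne {J : Type} [DecidableEq J] {f : I → J} {d : J} (hf : ∀ c, f c ≠ d) (T : List (Tag α Q I)) :
    idc d (emb f T) = 0 := by
  simp [idc, emb, Tag.mp, List.countP_map, Function.comp_def, hf]
lemma bc_emb_ne {J : Type} [DecidableEq J] {f : I → J} {d : J} (hf : ∀ c, f c ≠ d) (T : List (Tag α Q I)) :
    bc d (emb f T) = 0 := by
  simp [bc, emb, Tag.mp, List.countP_map, Function.comp_def, hf]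
lemma sum_emb {I J : Type} (θ : Q → α × Bool → ℤ) (f : I → J) (T : List (Tag α Q I)) :
    ((emb f T).map fun a => θ a.p a.l).sum = (T.map fun a => θ a.p a.l).sum := by
  cases T <;> simp [emb, flagH, Tag.mp, Function.comp_def]
lemma chain_emb {I J : Type} (ψ : FreeGroup α →* Q) (f : I → J) (T : List (Tag α Q I)) (h : T.IsChain (Sc ψ)) :
    (emb f T).IsChain (Sc ψ) := by
  unfold emb
  rw [List.isChain_map]
  have h2 : (flagH T).IsChain (Sc ψ) := by
    cases T with
    | nil => simp [flagH]
    | cons a T =>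
      rw [List.isChain_cons] at h
      rw [flagH, List.isChain_cons]
      exact h
  refine h2.imp ?_
  rintro a b ⟨h1, h2⟩
  exact ⟨h1, fun h => ⟨by simp only [Tag.mp]; rw [(h2 h).1], (h2 h).2⟩⟩
lemma head_emb {I J : Type} (f : I → J) (T : List (Tag α Q I)) {b} (h : b ∈ (emb f T).head?) :
    ∃ a ∈ T.head?, b = ⟨a.p, a.l, a.tl, f a.id, true⟩ := by
  cases T with
  | nil => simp [emb, flagH] at h
  | cons a T => simp [emb, flagH, Tag.mp] at h ⊢; exact h.symm
lemma last_emb {I J : Type} (f : I → J) (T : List (Tag α Q I)) {b} (h : b ∈ (emb f T).getLast?) :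
    ∃ a ∈ T.getLast?, b.p = a.p ∧ b.l = a.l := by
  unfold emb at h
  rw [List.getLast?_map] at h
  cases T with
  | nil => simp [flagH] at h
  | cons a T =>
    cases T with
    | nil => simp [flagH] at h ⊢; subst h; simp [Tag.mp]
    | cons a' T =>
      simp only [flagH, List.getLast?_cons_cons] at h ⊢
      simp only [Option.mem_def, Option.map_eq_some_iff] at h
      obtain ⟨a, h1, rfl⟩ := h
      exact ⟨a, h1, rfl, rfl⟩
lemma split_emb {I J : Type} (f : I → J) (T : List (Tag α Q I)) {U b V} (h : emb f T = U ++ b :: V) :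
    ∃ U' a V', T = U' ++ a :: V' ∧ wd U' = wd U ∧ wd V' = wd V ∧ b.p = a.p ∧ b.l = a.l ∧ b.tl = a.tl ∧
      b.id = f a.id := by
  unfold emb at h
  cases T with
  | nil => simp [flagH] at h
  | cons a T =>
    rcases U with _ | ⟨u, U⟩
    · simp [flagH] at h
      obtain ⟨rfl, rfl⟩ := h
      exact ⟨[], a, T, rfl, rfl, by simp [wd, Tag.mp, Function.comp_def], rfl, rfl, rfl, rfl⟩
    · simp [flagH] at h
      obtain ⟨rfl, h⟩ := h
      obtain ⟨U', V', rfl, rfl, h'⟩ := List.map_eq_append_iff.1 h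
      obtain ⟨a', V'', rfl, rfl, rfl⟩ := List.map_eq_cons_iff.1 h'
      exact ⟨a :: U', a', V'', rfl, by simp [wd, Tag.mp, Function.comp_def], by simp [wd, Tag.mp, Function.comp_def], rfl, rfl, rfl, rfl⟩
end counts

/-- boundary of a van Kampen diagram -/
structure State {I : Type} [Fintype I] [DecidableEq I] (Rs : Set (List (α × Bool))) (ψ : FreeGroup α →* Q)
    (gc : I → Q) (rc : I → List (α × Bool)) (ic : I → ℕ) (T : List (Tag α Q I)) : Prop where
  cyc : Cyc (Sc ψ) T
  relt : ∀ a ∈ T, a.l :: a.tl ∈ Rs ∧ a.tl.length + 1 = (rc a.id).length ∧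
    ∃ q, q <+: rc a.id ∧ a.p = gc a.id * ψ (FreeGroup.mk q)
  rcR : ∀ c, rc c ∈ Rs
  area : ALe Rs (FreeGroup.mk (wd T)) (Fintype.card I)
  rem : ∀ U a V, T = U ++ a :: V →
    ALe Rs (FreeGroup.mk (wd U) * (FreeGroup.mk a.tl)⁻¹ * FreeGroup.mk (wd V)) (Fintype.card I - 1)
  flux : ∀ θ, AS ψ θ → (T.map fun a => θ a.p a.l).sum = ∑ c, pathSum ψ θ (gc c) (rc c)
  cell : ∀ c, 6 * (rc c).length + ic c ≤ 6 * idc c T + ic c * (rc c).length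
  brks : ∀ c, bc c T ≤ ic c
  euler : 6 + ∑ c, ic c + 2 * bk T ≤ 6 * Fintype.card I

lemma State.rot {I : Type} [Fintype I] [DecidableEq I] {Rs : Set (List (α × Bool))} {ψ : FreeGroup α →* Q}
    {gc : I → Q} {rc : I → List (α × Bool)} {ic : I → ℕ} {A B : List (Tag α Q I)}
    (h : State Rs ψ gc rc ic (A ++ B)) : State Rs ψ gc rc ic (B ++ A) where
  cyc := Cyc_rot h.cyc
  relt := fun a ha => h.relt a (by simp at ha ⊢; tauto)
  rcR := h.rcR
  area := by
    have := h.area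
    rw [wd_append, mk_app] at this ⊢
    exact this.swap
  rem := by
    intro U a V he
    rcases split_app he with ⟨b, h1, h2⟩ | ⟨b, h1, h2⟩
    · have := h.rem (A ++ U) a b (by rw [h1]; simp)
      rw [wd_append, mk_app, mul_assoc, mul_assoc] at this
      rw [h2, wd_append, mk_app]
      convert this.swap using 1; group
    · have := h.rem b a (V ++ B) (by rw [h2]; simp)
      rw [wd_append, mk_app, ← mul_assoc] at this
      rw [h1, wd_append, mk_app]
      convert this.swap using 1; group
  flux := by
    intro θ hθ
    rw [← h.flux θ hθ]; simp [add_comm]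
  cell := by intro c; have := h.cell c; simp at this ⊢; omega
  brks := by intro c; have := h.brks c; simp at this ⊢; omega
  euler := by have := h.euler; simp at this ⊢; omega

lemma run_prefix {I : Type} (ψ : FreeGroup α →* Q) : ∀ (R : List (Tag α Q I)) (a : Tag α Q I),
    (a :: R).IsChain (Sc ψ) → (∀ b ∈ R, b.brk = false) →
    (∀ b ∈ R, b.id = a.id) ∧ (wd (a :: R)).take (a.tl.length + 1) <+: a.l :: a.tl := by
  intro R
  induction R with
  | nil => intro a _ _; simp
  | cons b R ih =>
    intro a h1 h2
    rw [List.isChain_cons_cons] at h1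
    obtain ⟨h3, h4⟩ := ih b h1.2 (fun c hc => h2 c (by simp [hc]))
    obtain ⟨h5, h6⟩ := h1.1.2 (h2 b (by simp))
    refine ⟨by simp only [List.mem_cons, forall_eq_or_imp]; exact ⟨h5, fun c hc => (h3 c hc).trans h5⟩, ?_⟩
    rw [wd_cons, List.take_succ_cons, List.cons_prefix_cons]
    refine ⟨rfl, ?_⟩
    have hl : b.tl.length = a.tl.length := by have := congrArg List.length h6; simpa using this
    rw [h6, hl] at h4
    have := h4.take a.tl.length
    rwa [List.take_take, min_eq_left (by omega), List.take_left'  rfl] at this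

/-- lengths of pieces -/
lemma pieces {I : Type} [DecidableEq I] {Rs : Set (List (α × Bool))} (hSC : SC Rs) (ψ : FreeGroup α →* Q)
    (len : I → ℕ) : ∀ (n : ℕ) (S : List (Tag α Q I)) (σ : List (α × Bool)), S.length ≤ n → wd S ++ σ ∈ Rs →
    S.IsChain (Sc ψ) → (∀ a ∈ S.head?, a.brk = true) →
    (∀ a ∈ S, a.l :: a.tl ∈ Rs ∧ a.tl.length + 1 = len a.id) →
    (∀ S0 a S1, S = S0 ++ a :: S1 → a.l :: a.tl ≠ wd (a :: S1) ++ σ ++ wd S0) →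
    6 * S.length + bk S ≤ bk S * (S.length + σ.length) ∧
      ∀ c, 6 * idc c S + bc c S ≤ bc c S * len c := by
  intro n
  induction n with
  | zero => intro S σ h; rw [List.length_eq_zero_iff.1 (Nat.le_zero.1 h)]; simp
  | succ n ih =>
    intro S σ hn hσ hch hhd hrel hne
    rcases S with _ | ⟨a, S⟩
    · simp
    have hab : a.brk = true := hhd a (by simp)
    set R := S.takeWhile fun b => !b.brk with hR
    set S' := S.dropWhile fun b => !b.brk with hS'
    have hS : S = R ++ S' := (List.takeWhile_append_dropWhile).symm
    have hRn : ∀ b ∈ R, b.brk = false := by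
      intro b hb; simpa using List.mem_takeWhile_imp hb
    have hS'h : ∀ b ∈ S'.head?, b.brk = true := by
      intro b hb
      have := List.head?_dropWhile_not (fun b : Tag α Q I => !b.brk) S
      rw [← hS', hb] at this
      simpa using this
    clear_value R S'
    subst hS
    rw [← List.cons_append, List.isChain_append] at hch
    obtain ⟨hid, hpre⟩ := run_prefix ψ R a hch.1 hRn
    have hσ2 : wd S' ++ (σ ++ wd (a :: R)) ∈ Rs := by
      have := hSC.rot (wd (a :: R)) (wd S' ++ σ) (by simpa using hσ)
      simpa using this
    obtain ⟨ih1, ih2⟩ := ih S' (σ ++ wd (a :: R)) (by simp at hn; omega) hσ2 hch.2.1 hS'h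
      (fun b hb => hrel b (by simp [hb])) (by
        intro S0 b S1 he
        have := hne (a :: R ++ S0) b S1 (by rw [he]; simp)
        intro h; apply this; rw [h]; simp)
    have hbkR : bk (a :: R) = 1 := by
      rw [bk_cons, if_pos hab]
      simp [bk, List.countP_eq_zero]; exact hRn
    have hbcR : ∀ c, bc c (a :: R) = if a.id = c then 1 else 0 := by
      intro c
      rw [bc_cons]
      have : bc c R = 0 := by simp [bc, List.countP_eq_zero]; intro b hb h; rw [hRn b hb] at h; simp at h
      simp [this, hab]
    have hidR : ∀ c, idc c (a :: R) = if a.id = c then R.length + 1 else 0 := by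
      intro c
      rw [idc_cons]
      have : idc c R = if a.id = c then R.length else 0 := by
        split_ifs with h
        · simp only [idc, List.countP_eq_length]; intro b hb; simp [hid b hb, h]
        · simp only [idc, List.countP_eq_zero]; intro b hb; simp [hid b hb, h]
      rw [this]; split_ifs <;> omega
    obtain ⟨hra, hla⟩ := hrel a (by simp)
    -- the piece
    have hU2 : (wd (a :: R)).take (a.tl.length + 1) <+: wd (a :: (R ++ S')) ++ σ := by
      refine (List.take_prefix _ _).trans ⟨wd S' ++ σ, by simp⟩
    have hpc := hSC.pc _ hra _ hσ (by simpa using hne [] a (R ++ S') rfl) _ hpre hU2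
    have hL : (R.length + 1) ≤ a.tl.length + 1 := by
      by_contra hcon
      have : ((wd (a :: R)).take (a.tl.length + 1)).length = a.tl.length + 1 := by
        rw [List.length_take, wd_length]; simp at hcon ⊢; omega
      rw [this] at hpc; simp at hpc; omega
    have hUl : ((wd (a :: R)).take (a.tl.length + 1)).length = R.length + 1 := by
        rw [List.length_take, wd_length]; simp; omega
    rw [hUl] at hpc
    simp at hpc
    constructor
    · have e1 : bk (a :: (R ++ S')) = 1 + bk S' := by rw [← List.cons_append, bk_append, hbkR]
      rw [e1]
      simp at ih1 ⊢
      have e2 : S'.length + (σ.length + (R.length + 1)) = R.length + S'.length + 1 + σ.length := by omega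
      rw [e2] at ih1
      rw [add_mul, one_mul]
      omega
    · intro c
      rw [← List.cons_append, bc_append, idc_append, hbcR, hidR]
      have := ih2 c
      split_ifs with h
      · subst h; rw [← hla, add_mul, one_mul]; rw [← hla] at this; omega
      · simp; omega

lemma glue {I J : Type} [Fintype I] [DecidableEq I] [Fintype J] [DecidableEq J]
    {Rs : Set (List (α × Bool))} (hSC : SC Rs) {ψ : FreeGroup α →* Q}
    {gc : I → Q} {rc : I → List (α × Bool)} {ic : I → ℕ} {Y Tt : List (Tag α Q I)}
    {gc2 : J → Q} {rc2 : J → List (α × Bool)} {ic2 : J → ℕ} {T2 V : List (Tag α Q J)}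
    (D1 : State Rs ψ gc rc ic (Y ++ Tt)) (D2 : State Rs ψ gc2 rc2 ic2 (T2 ++ V))
    (hY : Y ≠ []) (hTt : Tt ≠ []) (hT2 : T2 ≠ []) (hV : V ≠ []) (c : I) (hid : ∀ a ∈ Tt, a.id = c)
    (hw2 : wd T2 = invRev (wd Tt)) (hp : ∀ a ∈ T2.head?, ∀ y ∈ Y.head?, a.p = y.p)
    (σ : List (α × Bool)) (hσ : wd T2 ++ σ ∈ Rs) (hlen : T2.length + σ.length = (rc c).length)
    (hrem : ALe Rs (FreeGroup.mk (wd Y) * FreeGroup.mk σ) (Fintype.card I - 1))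
    (hmin : ∀ n, n < Fintype.card I + Fintype.card J →
      ¬ ALe Rs (FreeGroup.mk (wd Y) * FreeGroup.mk (wd V)) n) :
    State Rs ψ (Sum.elim gc gc2) (Sum.elim rc rc2)
      (Sum.elim (fun d => ic d + if d = c then bk (flagH T2) else 0) (fun d => ic2 d + bc d (flagH T2)))
      (emb Sum.inl Y ++ emb Sum.inr V) := by
  obtain ⟨t, Tt', rfl⟩ := List.exists_cons_of_ne_nil hTt
  obtain ⟨y, Y', rfl⟩ := List.exists_cons_of_ne_nil hY
  obtain ⟨a2, T2', rfl⟩ := List.exists_cons_of_ne_nil hT2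
  obtain ⟨v, V', rfl⟩ := List.exists_cons_of_ne_nil hV
  have c1 := (Cyc_append hY hTt).1 D1.cyc
  have c2 := (Cyc_append hT2 hV).1 D2.cyc
  have hpay : a2.p = y.p := hp a2 (by simp) y (by simp)
  have hy : y.p = t.p * ψ (FreeGroup.mk (wd (t :: Tt'))) := by
    apply chain_end ψ (t :: Tt') y t.p
    · rw [List.isChain_append]
      exact ⟨c1.2.1, by simp, fun x hx z hz => by simp at hz; subst hz; exact c1.2.2.2 x hx _ (by simp)⟩
    · simp
  have hv : v.p = a2.p * ψ (FreeGroup.mk (wd (a2 :: T2'))) := by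
    apply chain_end ψ (a2 :: T2') v a2.p
    · rw [List.isChain_append]
      exact ⟨c2.1, by simp, fun x hx z hz => by simp at hz; subst hz; exact c2.2.2.1 x hx _ (by simp)⟩
    · simp
  have hvt : v.p = t.p := by
    rw [hv, hw2, hpay, hy, mk_invRev, _root_.map_inv, mul_inv_cancel_right]
  have mt : FreeGroup.mk (wd (a2 :: T2')) = (FreeGroup.mk (wd (t :: Tt')))⁻¹ := by rw [hw2, mk_invRev]
  have hI : 0 < Fintype.card I := Fintype.card_pos_iff.2 ⟨c⟩
  have hJ : 0 < Fintype.card J := Fintype.card_pos_iff.2 ⟨v.id⟩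
  -- pieces
  have hpieces := pieces hSC ψ (fun d => (rc2 d).length) _ (flagH (a2 :: T2')) σ le_rfl
    (by rw [wd_flagH]; exact hσ)
    (by have := c2.1
        rw [flagH, List.isChain_cons]; rw [List.isChain_cons] at this; exact this)
    (by simp [flagH])
    (by
      intro a ha
      simp only [flagH, List.mem_cons] at ha
      rcases ha with rfl | ha
      · exact ⟨(D2.relt a2 (by simp)).1, (D2.relt a2 (by simp)).2.1⟩
      · exact ⟨(D2.relt a (by simp [ha])).1, (D2.relt a (by simp [ha])).2.1⟩)
    (by
      intro S0 b S1 he hcon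
      have key : ∃ S0' b' S1', a2 :: T2' = S0' ++ b' :: S1' ∧ wd S0' = wd S0 ∧ wd S1' = wd S1 ∧
          b'.l = b.l ∧ b'.tl = b.tl := by
        rcases S0 with _ | ⟨s, S0⟩
        · simp [flagH] at he
          obtain ⟨rfl, rfl⟩ := he
          exact ⟨[], a2, T2', rfl, rfl, rfl, rfl, rfl⟩
        · simp [flagH] at he
          obtain ⟨rfl, he⟩ := he
          exact ⟨a2 :: S0, b, S1, by rw [he]; rfl, rfl, rfl, rfl, rfl⟩
      obtain ⟨S0', b', S1', e0, e1, e2, e3, e4⟩ := key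
      have hr := D2.rem S0' b' (S1' ++ v :: V') (by rw [e0]; simp)
      have htl : FreeGroup.mk b'.tl = (FreeGroup.mk [b'.l])⁻¹ * (FreeGroup.mk [b'.l] * FreeGroup.mk (wd S1') *
          FreeGroup.mk σ * FreeGroup.mk (wd S0')) := by
        have := congrArg FreeGroup.mk hcon
        rw [mk_cons', mk_app, mk_app, wd_cons, mk_cons' b.l (wd S1), ← e1, ← e2, ← e3, ← e4] at this
        rw [← this]; group
      rw [wd_append, mk_app, htl] at hr
      have hr2 := hrem.mul (n := Fintype.card I - 1) hr
      apply hmin _ _ (by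
        convert hr2 using 1
        group)
      omega)
  obtain ⟨hp1, hp2⟩ := hpieces
  rw [length_flagH] at hp1
  have hnb : bk (a2 :: T2') + 1 ≥ bk (flagH (a2 :: T2')) := bk_flagH _
  have hlastT2 : ∀ x ∈ (a2 :: T2').getLast?, 1 ≤ bc x.id (flagH (a2 :: T2')) := by
    intro x hx
    have h1 := hp2 x.id
    by_contra hcon
    have h0 : bc x.id (flagH (a2 :: T2')) = 0 := by omega
    rw [h0] at h1
    have h2 : idc x.id (flagH (a2 :: T2')) = 0 := by omega
    rw [idc_flagH] at h2
    simp only [idc, List.countP_eq_zero] at h2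
    have := h2 x (List.mem_of_getLast? hx)
    simp at this
  have hbk1 : 1 ≤ bk (flagH (a2 :: T2')) := by simp [flagH, bk_cons]
  refine ⟨?_, ?_, ?_, ?_, ?_, ?_, ?_, ?_, ?_⟩
  · rw [Cyc_append (by simp [emb, flagH]) (by simp [emb, flagH])]
    refine ⟨chain_emb ψ _ _ c1.1, chain_emb ψ _ _ c2.2.1, ?_, ?_⟩
    · intro x hx z hz
      obtain ⟨a, ha, h1, h2⟩ := last_emb _ _ hx
      obtain ⟨b, hb, rfl⟩ := head_emb _ _ hz
      simp at hb; subst hb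
      refine ⟨?_, by simp⟩
      simp only
      rw [hvt, h1, h2]
      exact (c1.2.2.1 a ha t (by simp)).1
    · intro x hx z hz
      obtain ⟨a, ha, h1, h2⟩ := last_emb _ _ hx
      obtain ⟨b, hb, rfl⟩ := head_emb _ _ hz
      simp at hb; subst hb
      refine ⟨?_, by simp⟩
      simp only
      rw [← hpay, h1, h2]
      exact (c2.2.2.2 a ha a2 (by simp)).1
  · intro a ha
    obtain ⟨U, V, he⟩ := List.append_of_mem ha
    rcases split_app he with ⟨b, h1, h2⟩ | ⟨b, h1, h2⟩
    · obtain ⟨U', a', W', e1, e2, e3, e4, e5, e6, e7⟩ := split_emb _ _ h1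
      have := D1.relt a' (by rw [e1]; simp)
      rw [e4, e5, e6, e7]; exact this
    · obtain ⟨U', a', W', e1, e2, e3, e4, e5, e6, e7⟩ := split_emb _ _ h2
      have := D2.relt a' (by rw [e1]; simp)
      rw [e4, e5, e6, e7]; exact this
  · rintro (d | d)
    · exact D1.rcR d
    · exact D2.rcR d
  · have h := D1.area.mul D2.area
    rw [Fintype.card_sum]
    rw [wd_append, wd_emb, wd_emb, mk_app]
    rw [wd_append, wd_append, mk_app, mk_app, mt] at h
    convert h using 1; group
  · intro U a V he
    rw [Fintype.card_sum]
    rcases split_app he with ⟨b, h1, h2⟩ | ⟨b, h1, h2⟩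
    · obtain ⟨U', a', W', e1, e2, e3, e4, e5, e6, e7⟩ := split_emb _ _ h1
      have h3 := D1.rem U' a' (W' ++ t :: Tt') (by rw [e1]; simp)
      have h := (h3.mul D2.area).mono (m := Fintype.card I + Fintype.card J - 1) (by omega)
      rw [h2, wd_append, wd_emb, mk_app, ← e2, ← e3, e6]
      rw [wd_append, wd_append, mk_app, mk_app, mt] at h
      convert h using 1; group
    · obtain ⟨U', a', W', e1, e2, e3, e4, e5, e6, e7⟩ := split_emb _ _ h2
      have h3 := D2.rem (a2 :: T2' ++ U') a' W' (by rw [e1]; simp)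
      have h := (D1.area.mul h3).mono (m := Fintype.card I + Fintype.card J - 1) (by omega)
      rw [h1, wd_append, wd_emb, mk_app, ← e2, ← e3, e6]
      rw [wd_append, wd_append, mk_app, mk_app, mt] at h
      convert h using 1; group
  · intro θ hθ
    rw [List.map_append, List.sum_append, sum_emb, sum_emb, Fintype.sum_sum_type]
    simp only [Sum.elim_inl, Sum.elim_inr]
    rw [← D1.flux θ hθ, ← D2.flux θ hθ]
    rw [List.map_append, List.sum_append, List.map_append, List.sum_append]
    rw [chain_sum ψ θ (t :: Tt') t.p c1.2.1 (by simp), chain_sum ψ θ (a2 :: T2') a2.p c2.1 (by simp), hw2, hpay, hy,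
      pathSum_inv ψ hθ]
    ring
  · rintro (d | d)
    · simp only [Sum.elim_inl]
      rw [idc_append, idc_emb Sum.inl_injective, idc_emb_ne (by simp)]
      have h1 := D1.cell d
      rw [idc_append] at h1
      split_ifs with hd
      · subst hd
        have h2 : idc d (t :: Tt') = (a2 :: T2').length := by
          have e : (a2 :: T2').length = (t :: Tt').length := by
            have := congrArg List.length hw2; rwa [invRev_length, wd_length, wd_length] at this
          rw [e, idc, List.countP_eq_length]
          intro a ha; simp [hid a ha]
        rw [hlen] at hp1
        rw [h2] at h1
        rw [add_mul]; omega
      · have h2 : idc d (t :: Tt') = 0 := by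
          rw [idc, List.countP_eq_zero]; intro a ha; rw [hid a ha]; simpa using fun h => hd h.symm
        rw [add_zero]; omega
    · simp only [Sum.elim_inr]
      rw [idc_append, idc_emb Sum.inr_injective, idc_emb_ne (by simp)]
      have h1 := D2.cell d
      rw [idc_append] at h1
      have h2 := hp2 d
      rw [idc_flagH] at h2
      rw [add_mul]; omega
  · rintro (d | d)
    · simp only [Sum.elim_inl]
      rw [bc_append, bc_emb Sum.inl_injective, bc_emb_ne (by simp)]
      have h1 := D1.brks d
      rw [bc_append] at h1
      have h2 := bc_flagH d (y :: Y')
      by_cases hd : d = c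
      · rw [if_pos hd]
        split_ifs at h2 <;> omega
      · rw [if_neg hd]
        rw [if_neg] at h2
        · omega
        · rintro ⟨a, ha, h3, h4⟩
          obtain ⟨x, hx⟩ : ∃ x, x ∈ (t :: Tt').getLast? := ⟨_, List.getLast?_eq_getLast_of_ne_nil hTt⟩
          have h5 := (c1.2.2.2 x hx a ha).2 h3
          exact hd (by rw [← h4, h5.1, hid x (List.mem_of_getLast? hx)])
    · simp only [Sum.elim_inr]
      rw [bc_append, bc_emb Sum.inr_injective, bc_emb_ne (by simp)]
      have h1 := D2.brks d
      rw [bc_append] at h1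
      have h2 := bc_flagH d (v :: V')
      split_ifs at h2 with h
      · obtain ⟨a, ha, h3, h4⟩ := h
        obtain ⟨x, hx⟩ : ∃ x, x ∈ (a2 :: T2').getLast? := ⟨_, List.getLast?_eq_getLast_of_ne_nil hT2⟩
        have h5 := (c2.2.2.1 x hx a ha).2 h3
        have h6 := hlastT2 x hx
        rw [← h5.1, h4] at h6
        omega
      · omega
  · rw [Fintype.sum_sum_type, Fintype.card_sum]
    simp only [Sum.elim_inl, Sum.elim_inr]
    rw [Finset.sum_add_distrib, Finset.sum_add_distrib, sum_bc, Finset.sum_ite_eq', if_pos (Finset.mem_univ c)]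
    rw [bk_append, bk_emb, bk_emb]
    have e1 := D1.euler
    have e2 := D2.euler
    rw [bk_append] at e1 e2
    have := bk_flagH (y :: Y')
    have := bk_flagH (v :: V')
    omega

end state
set_option linter.unusedSectionVars false
set_option linter.style.longLine false
section greend
variable {α : Type*} [DecidableEq α] {Q : Type*} [Group Q]
open FreeGroup

/-- tags of a single relator -/
def baseT (ψ : FreeGroup α →* Q) (g : Q) : List (α × Bool) → List (α × Bool) → List (Tag α Q Unit)
  | _, [] => []
  | u, x :: v => ⟨g * ψ (FreeGroup.mk u), x, v ++ u, (), false⟩ :: baseT ψ g (u ++ [x]) v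

lemma wd_baseT (ψ : FreeGroup α →* Q) (g : Q) (v) : ∀ u, wd (baseT ψ g u v) = v := by
  induction v with
  | nil => intro u; rfl
  | cons x v ih => intro u; simp [baseT, ih]

lemma baseT_head (ψ : FreeGroup α →* Q) (g : Q) (u v) : ∀ b ∈ (baseT ψ g u v).head?,
    b.p = g * ψ (FreeGroup.mk u) ∧ b.l :: b.tl = v ++ u := by
  cases v <;> simp [baseT]

lemma baseT_chain (ψ : FreeGroup α →* Q) (g : Q) (v) : ∀ u, (baseT ψ g u v).IsChain (Sc ψ) := by
  induction v with
  | nil => intro u; simp [baseT]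
  | cons x v ih =>
    intro u
    rw [baseT, List.isChain_cons]
    refine ⟨?_, ih _⟩
    intro b hb
    obtain ⟨h1, h2⟩ := baseT_head ψ g _ _ b hb
    refine ⟨by rw [h1, mk_app, _root_.map_mul, mul_assoc], fun _ => ⟨rfl, by rw [h2]; simp⟩⟩

lemma baseT_last (ψ : FreeGroup α →* Q) (g : Q) (v) : ∀ u, ∀ b ∈ (baseT ψ g u v).getLast?,
    b.p * ψ (FreeGroup.mk [b.l]) = g * ψ (FreeGroup.mk (u ++ v)) ∧ b.tl ++ [b.l] = u ++ v := by
  induction v with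
  | nil => intro u; simp [baseT]
  | cons x v ih =>
    intro u b hb
    rcases v with _ | ⟨y, v⟩
    · simp [baseT] at hb
      subst hb
      simp only [List.nil_append, and_true]
      rw [mk_app, _root_.map_mul, mul_assoc]
    · have : (baseT ψ g u (x :: y :: v)).getLast? = (baseT ψ g (u ++ [x]) (y :: v)).getLast? := by
        simp [baseT]
      rw [this] at hb
      have := ih _ b hb
      simpa [-mul_mk] using this

lemma baseT_mem (ψ : FreeGroup α →* Q) (g : Q) (v) : ∀ u, ∀ b ∈ baseT ψ g u v, b.brk = false ∧
    ∃ q s, b.l :: b.tl = s ++ q ∧ u ++ v = q ++ s ∧ b.p = g * ψ (FreeGroup.mk q) := by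
  induction v with
  | nil => intro u; simp [baseT]
  | cons x v ih =>
    intro u b hb
    rw [baseT, List.mem_cons] at hb
    rcases hb with rfl | hb
    · exact ⟨rfl, u, x :: v, rfl, rfl, rfl⟩
    · have := ih _ b hb
      simpa using this

lemma baseT_split (ψ : FreeGroup α →* Q) (g : Q) (v) : ∀ u U b V, baseT ψ g u v = U ++ b :: V →
    b.tl = wd V ++ u ++ wd U := by
  induction v with
  | nil => intro u; simp [baseT]
  | cons x v ih =>
    intro u U b V he
    rcases U with _ | ⟨c, U⟩
    · simp only [baseT, List.nil_append, List.cons.injEq] at he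
      rw [← he.1, ← he.2, wd_baseT]; simp
    · simp only [baseT, List.cons_append, List.cons.injEq] at he
      rw [ih _ _ _ _ he.2, ← he.1]; simp

lemma baseState {Rs : Set (List (α × Bool))} (hSC : SC Rs) {ψ : FreeGroup α →* Q}
    (hψ : ∀ r ∈ Rs, ψ (FreeGroup.mk r) = 1) (g : Q) {r} (hr : r ∈ Rs) :
    State Rs ψ (fun _ : Unit => g) (fun _ => r) (fun _ => 0) (baseT ψ g [] r) where
  cyc := by
    refine ⟨baseT_chain _ _ _ _, ?_⟩
    intro x hx y hy
    have h1 := baseT_last _ _ _ _ x hx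
    have h2 := baseT_head _ _ _ _ y hy
    refine ⟨?_, fun _ => ⟨rfl, ?_⟩⟩
    · rw [h1.1, h2.1, List.nil_append, hψ r hr, mk_nil', _root_.map_one]
    · rw [h1.2, h2.2]; simp
  relt := by
    intro a ha
    obtain ⟨_, q, s, h1, h2, h3⟩ := baseT_mem _ _ _ _ a ha
    simp at h2
    refine ⟨by rw [h1]; exact hSC.rot _ _ (h2 ▸ hr), ?_, q, ⟨s, h2.symm⟩, h3⟩
    have := congrArg List.length h1
    have h4 := congrArg List.length h2
    simp at this h4 ⊢; omega
  rcR := fun _ => hr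
  area := by rw [wd_baseT]; exact ALe.rel hr
  rem := by
    intro U a V he
    have := baseT_split _ _ _ _ _ _ _ he
    rw [this]
    simp only [List.append_nil]
    rw [mk_app]
    have e1 := @ALe.one α _ Rs
    convert e1 using 1
    group
  flux := by
    intro θ _
    rw [chain_sum ψ θ _ g (baseT_chain _ _ _ _), wd_baseT]
    · simp
    · intro a ha; rw [(baseT_head _ _ _ _ a ha).1, mk_nil']; simp
  cell := by
    intro c
    have : idc c (baseT ψ g [] r) = r.length := by
      have h : (baseT ψ g [] r).length = r.length := by rw [← wd_length, wd_baseT]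
      rw [← h, idc, List.countP_eq_length]; intros; simp
    rw [this]; simp
  brks := by
    intro c
    rw [Nat.le_zero, bc, List.countP_eq_zero]
    intro a ha; simp [(baseT_mem _ _ _ _ a ha).1]
  euler := by
    have : bk (baseT ψ g [] r) = 0 := by
      rw [bk, List.countP_eq_zero]
      intro a ha; simp [(baseT_mem _ _ _ _ a ha).1]
    rw [this]; simp

section seg
variable {I : Type} [DecidableEq I] {ψ : FreeGroup α →* Q}

lemma seg_zero {c : I} : ∀ (S : List (Tag α Q I)), S.IsChain (Sc ψ) → (∀ a ∈ S.head?, a.id ≠ c) →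
    bc c S = 0 → idc c S = 0 := by
  intro S
  induction S with
  | nil => simp
  | cons a S ih =>
    intro h1 h2 h3
    have ha : a.id ≠ c := h2 a (by simp)
    rw [List.isChain_cons] at h1
    rw [bc_cons] at h3
    rw [idc_cons, if_neg ha, zero_add]
    apply ih h1.2 _ (by omega)
    intro b hb hbc
    cases hbb : b.brk
    · exact ha (by rw [← ((h1.1 b hb).2 hbb).1, hbc])
    · obtain ⟨S', rfl⟩ := List.head?_eq_some_iff.1 hb
      rw [bc_cons c b] at h3
      simp [hbb, hbc] at h3

lemma seg_one {c : I} (S : List (Tag α Q I)) (h1 : S.IsChain (Sc ψ)) (h2 : ∀ a ∈ S.head?, a.id ≠ c)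
    (h3 : bc c S = 1) : ∃ U a R V, S = U ++ a :: (R ++ V) ∧ a.id = c ∧ (∀ b ∈ R, b.brk = false) ∧
      R.length + 1 = idc c S := by
  obtain ⟨a, ha, hac⟩ : ∃ a ∈ S, (a.brk && decide (a.id = c)) = true := by
    have : 0 < bc c S := by omega
    simpa only [bc, List.countP_pos_iff] using this
  obtain ⟨U, W, rfl⟩ := List.append_of_mem ha
  simp at hac
  rw [bc_append, bc_cons, if_pos hac] at h3
  rw [List.isChain_append] at h1
  have hU : idc c U = 0 := by
    apply seg_zero (ψ := ψ) U h1.1 _ (by omega)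
    intro b hb
    apply h2 b
    cases U <;> simp_all
  have hW := List.takeWhile_append_dropWhile (p := fun b : Tag α Q I => decide (b.id = c)) (l := W)
  set R := W.takeWhile (fun b : Tag α Q I => decide (b.id = c)) with hR
  set V := W.dropWhile (fun b : Tag α Q I => decide (b.id = c)) with hV
  have hRid : ∀ b ∈ R, b.id = c := by
    intro b hb; simpa using List.mem_takeWhile_imp hb
  have hVh : ∀ b ∈ V.head?, b.id ≠ c := by
    intro b hb
    have := List.head?_dropWhile_not (fun b : Tag α Q I => decide (b.id = c)) W
    rw [← hV, hb] at this
    simpa using this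
  clear_value R V
  subst hW
  have hch := h1.2.1
  rw [List.isChain_cons, List.isChain_append] at hch
  rw [bc_append] at h3
  have hV0 : idc c V = 0 := seg_zero (ψ := ψ) V hch.2.2.1 hVh (by omega)
  have hR0 : bc c R = 0 := by omega
  have hRl : idc c R = R.length := by
    rw [idc, List.countP_eq_length]; intro b hb; simp [hRid b hb]
  refine ⟨U, a, R, V, rfl, hac.2, ?_, ?_⟩
  · intro b hb
    rw [bc, List.countP_eq_zero] at hR0
    simpa [hRid b hb] using hR0 b hb
  · rw [idc_append, idc_cons, idc_append, if_pos hac.2, hU, hV0, hRl]; omega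
end seg

section cells
variable {I : Type} [Fintype I] [DecidableEq I] {Rs : Set (List (α × Bool))} {ψ : FreeGroup α →* Q}
    {gc : I → Q} {rc : I → List (α × Bool)} {ic : I → ℕ} {T : List (Tag α Q I)}

lemma State.run (h : State Rs ψ gc rc ic T) {U a R V} (hT : T = U ++ a :: (R ++ V))
    (hR : ∀ b ∈ R, b.brk = false) (hl : (rc a.id).length < 2 * (R.length + 1)) :
    ∃ e e' v, wd (a :: R) = e ++ v ∧ e ++ e' ∈ Rs ∧ e'.length < e.length ∧
      (e ++ e').length = (rc a.id).length ∧
      ALe Rs (FreeGroup.mk (wd U) * (FreeGroup.mk e')⁻¹ * FreeGroup.mk v * FreeGroup.mk (wd V))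
        (Fintype.card I - 1) := by
  have hch := h.cyc.1
  rw [hT, List.isChain_append, ← List.cons_append, List.isChain_append] at hch
  obtain ⟨_, e', he'⟩ := run_prefix ψ R a hch.2.1.1 hR
  set e := (wd (a :: R)).take (a.tl.length + 1) with he
  have hr := h.relt a (by rw [hT]; simp)
  refine ⟨e, e', (wd (a :: R)).drop (a.tl.length + 1), (List.take_append_drop _ _).symm, he' ▸ hr.1, ?_, ?_, ?_⟩
  · have h1 := congrArg List.length he'
    have h2 : e.length = min (a.tl.length + 1) (R.length + 1) := by rw [he]; simp
    simp at h1; omega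
  · rw [he']; simpa using hr.2.1
  · have h1 := h.rem U a (R ++ V) hT
    have h2 : FreeGroup.mk (wd (a :: R)) = FreeGroup.mk e * FreeGroup.mk ((wd (a :: R)).drop (a.tl.length + 1)) := by
      rw [← mk_app, he, List.take_append_drop]
    have h3 := congrArg FreeGroup.mk he'
    rw [mk_app, mk_cons'] at h3
    rw [wd_cons, mk_cons' a.l] at h2
    rw [wd_append, mk_app] at h1
    convert h1 using 1
    have h4 : FreeGroup.mk e' = (FreeGroup.mk e)⁻¹ * (FreeGroup.mk [a.l] * FreeGroup.mk a.tl) := by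
      rw [← h3]; group
    have h5 : FreeGroup.mk ((wd (a :: R)).drop (a.tl.length + 1)) = (FreeGroup.mk e)⁻¹ *
      (FreeGroup.mk [a.l] * FreeGroup.mk (wd R)) := by rw [h2, wd_cons]; group
    rw [h4, h5]; group

lemma State.untouched (hSC : SC Rs) (h : State Rs ψ gc rc ic T) {c} (hc : idc c T = 0) : 7 ≤ ic c := by
  have h1 := h.cell c
  have h2 := List.length_pos_iff.2 (hSC.ne _ (h.rcR c))
  rw [hc] at h1
  by_contra hcon
  have : ic c * (rc c).length ≤ 6 * (rc c).length := Nat.mul_le_mul_right _ (by omega)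
  have h0 : ic c = 0 := by omega
  rw [h0] at h1
  omega

lemma State.half (hSC : SC Rs) (h : State Rs ψ gc rc ic T) {c} (hc : ic c ≤ 3) :
    (rc c).length < 2 * idc c T := by
  have h1 := h.cell c
  have h2 := List.length_pos_iff.2 (hSC.ne _ (h.rcR c))
  interval_cases ic c <;> omega

lemma State.kappa (h : State Rs ψ gc rc ic T) : (6 : ℤ) ≤ ∑ c, (6 - 2 * (bc c T : ℤ) - ic c) := by
  have h1 := h.euler
  rw [Finset.sum_sub_distrib, Finset.sum_sub_distrib, ← Finset.mul_sum]
  have h2 : ∑ c, (bc c T : ℤ) = bk T := by exact_mod_cast sum_bc T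
  rw [h2, Finset.sum_const, Finset.card_univ]
  have h3 : ∑ c, (ic c : ℤ) = ((∑ c, ic c : ℕ) : ℤ) := by push_cast; rfl
  rw [h3]
  simp; omega

lemma State.exists_pos (h : State Rs ψ gc rc ic T) (c : I) (hc : (6 : ℤ) - 2 * (bc c T : ℤ) - ic c < 6) :
    ∃ d, d ≠ c ∧ (0 : ℤ) < 6 - 2 * (bc d T : ℤ) - ic d := by
  by_contra hcon
  push Not at hcon
  have h1 := h.kappa
  rw [← Finset.add_sum_erase _ _ (Finset.mem_univ c)] at h1
  have h2 := Finset.sum_nonpos (s := Finset.univ.erase c) (f := fun d => 6 - 2 * (bc d T : ℤ) - ic d)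
    (fun d hd => hcon d (Finset.ne_of_mem_erase hd))
  omega

/-- linear Greendlinger lemma -/
lemma State.greendlinger (hSC : SC Rs) (h : State Rs ψ gc rc ic T) (hT : T ≠ []) :
    ∃ u e v e', wd T = u ++ e ++ v ∧ e ++ e' ∈ Rs ∧ e'.length < e.length ∧
      ALe Rs (FreeGroup.mk u * (FreeGroup.mk e')⁻¹ * FreeGroup.mk v) (Fintype.card I - 1) := by
  obtain ⟨a, T', rfl⟩ := List.exists_cons_of_ne_nil hT
  by_cases hb : bc a.id (a :: T') = 0
  · have hall : ∀ b ∈ a :: T', b.id = a.id := by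
      intro b hb'
      by_contra hne
      obtain ⟨U, V, he⟩ := List.append_of_mem hb'
      rw [he] at h
      have h2 := h.rot
      have h3 := seg_zero (ψ := ψ) (c := a.id) _ h2.cyc.1 (by simpa using hne) (by
        rw [he] at hb; rw [bc_append] at hb ⊢; omega)
      have h4 : idc a.id (a :: T') = 0 := by rw [he, idc_append]; rw [idc_append] at h3; omega
      rw [idc_cons] at h4; simp at h4
    have hnb : ∀ b ∈ a :: T', b.brk = false := by
      intro b hb'
      rw [bc, List.countP_eq_zero] at hb
      simpa [hall b hb'] using hb b hb'
    have hi : ic a.id = 0 := by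
      by_contra hi
      obtain ⟨d, hd, hd2⟩ := h.exists_pos a.id (by omega)
      have : idc d (a :: T') = 0 := by
        rw [idc, List.countP_eq_zero]; intro b hb'; rw [hall b hb']; simpa using hd.symm
      have := h.untouched hSC this
      omega
    have hx := h.half hSC (c := a.id) (by omega)
    have hxl : idc a.id (a :: T') = T'.length + 1 := by
      rw [← List.length_cons (a := a), idc, List.countP_eq_length]; intro b hb'; simp [hall b hb']
    obtain ⟨e, e', v, h1, h2, h3, _, h4⟩ := h.run (U := []) (a := a) (R := T') (V := []) (by simp)
      (fun b hb' => hnb b (by simp [hb'])) (by omega)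
    exact ⟨[], e, v, e', by simpa using h1, h2, h3, by simpa [mk_nil', -mul_mk, -inv_mk] using h4⟩
  · have hk := h.brks a.id
    obtain ⟨d, hd, hd2⟩ := h.exists_pos a.id (by omega)
    have hd0 : idc d (a :: T') ≠ 0 := fun h0 => by have := h.untouched hSC h0; omega
    have hd1 : bc d (a :: T') ≠ 0 := fun h0 => hd0 (seg_zero (ψ := ψ) _ h.cyc.1 (by simpa using hd.symm) h0)
    have hkd := h.brks d
    have hx := h.half hSC (c := d) (by omega)
    obtain ⟨U, b, R, V, hT, hbd, hR, hRl⟩ := seg_one (ψ := ψ) _ h.cyc.1 (c := d) (by simpa using hd.symm) (by omega)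
    obtain ⟨e, e', v, h1, h2, h3, _, h4⟩ := h.run hT hR (by rw [hbd]; omega)
    refine ⟨wd U, e, v ++ wd V, e', ?_, h2, h3, ?_⟩
    · rw [hT, wd_append, ← List.cons_append, wd_append, h1]; simp
    · rw [mk_app v, ← mul_assoc]; exact h4
end cells

/-- indecomposability -/
def Indec (Rs : Set (List (α × Bool))) (w : List (α × Bool)) (N : ℕ) : Prop :=
  ∀ u z v, w = u ++ z ++ v → z ≠ [] → u ++ v ≠ [] → ∀ n1 n2, ALe Rs (FreeGroup.mk z) n1 →
    ALe Rs (FreeGroup.mk u * FreeGroup.mk v) n2 → n1 + n2 ≤ N → False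

/-- there is a diagram boundary -/
def HasState (Rs : Set (List (α × Bool))) (ψ : FreeGroup α →* Q) (g : Q) (w : List (α × Bool)) (N : ℕ) : Prop :=
  ∃ (I : Type) (_ : Fintype I) (_ : DecidableEq I) (gc : I → Q) (rc : I → List (α × Bool)) (ic : I → ℕ)
    (T : List (Tag α Q I)), State Rs ψ gc rc ic T ∧ wd T = w ∧ (∀ a ∈ T.head?, a.p = g) ∧ Fintype.card I = N

/-- main claim -/
def Claim (Rs : Set (List (α × Bool))) (ψ : FreeGroup α →* Q) (N : ℕ) : Prop :=
  ∀ w g, 1 ≤ N → ALe Rs (FreeGroup.mk w) N → (∀ n < N, ¬ ALe Rs (FreeGroup.mk w) n) → Indec Rs w N →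
    HasState Rs ψ g w N

lemma indec_reduced {Rs : Set (List (α × Bool))} {w N} (hN : 1 ≤ N) (hA : ALe Rs (FreeGroup.mk w) N)
    (hmin : ∀ n < N, ¬ ALe Rs (FreeGroup.mk w) n) (hI : Indec Rs w N) : FreeGroup.IsReduced w := by
  rw [isReduced_iff_not_step]
  intro L hL
  cases hL with
  | @not L1 L2 x b =>
    have hz : FreeGroup.mk [(x, b), (x, !b)] = 1 := by
      have := mk_nx (x, b)
      rw [mk_cons']; simp only [nx] at this; rw [this]; group
    have e : FreeGroup.mk (L1 ++ (x, b) :: (x, !b) :: L2) = FreeGroup.mk L1 * FreeGroup.mk L2 := by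
      have : L1 ++ (x, b) :: (x, !b) :: L2 = L1 ++ ([(x, b), (x, !b)] ++ L2) := rfl
      rw [this, mk_app, mk_app, hz, one_mul]
    by_cases hL : L1 ++ L2 = []
    · apply hmin 0 (by omega)
      simp at hL
      rw [hL.1, hL.2, List.nil_append, hz]; exact ALe.one
    · exact hI L1 [(x, b), (x, !b)] L2 (by simp) (by simp) hL 0 N (by rw [hz]; exact ALe.one) (e ▸ hA) (by omega)

lemma RS_of_claim {Rs : Set (List (α × Bool))} (hSC : SC Rs) {ψ : FreeGroup α →* Q}
    {N : ℕ} (hC : ∀ M < N, Claim Rs ψ M) : ∀ l, ∀ u z v, z.length ≤ l → u ++ z ++ v ∈ Rs → z ≠ [] → u ++ v ≠ [] →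
      ∀ n < N, ¬ ALe Rs (FreeGroup.mk z) n := by
  classical
  intro l
  induction l with
  | zero => intro u z v h _ h2; exact absurd (List.length_eq_zero_iff.1 (Nat.le_zero.1 h)) h2
  | succ l ih =>
    intro u z v hl hr hz huv n hn hA
    have hex : ∃ n, ALe Rs (FreeGroup.mk z) n := ⟨n, hA⟩
    set M := Nat.find hex with hM
    have hAM : ALe Rs (FreeGroup.mk z) M := Nat.find_spec hex
    have hMn : M ≤ n := Nat.find_min' hex hA
    have hzr : FreeGroup.IsReduced z := (hSC.red _ hr).subword ⟨u, v, rfl⟩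
    have hM1 : 1 ≤ M := by
      by_contra h0
      have h0 : M = 0 := by omega
      rw [h0] at hAM
      have := hAM.zero
      exact hz (red_uniq hzr (by simp [FreeGroup.IsReduced]) this)
    obtain ⟨I, _, _, gc, rc, ic, T, hS, hw, -, hcard⟩ := hC M (by omega) z 1 hM1 hAM
      (fun k hk => Nat.find_min hex hk) (by
        intro u1 z1 v1 he hz1 huv1 n1 n2 h1 h2 h12
        have hlen := congrArg List.length he
        have := List.length_pos_iff.2 huv1
        simp at hlen this
        refine ih (u ++ u1) z1 (v1 ++ v) (by omega) (by rw [he] at hr; simpa using hr) hz1 ?_ n1 (by omega) h1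
        intro h; simp at h; apply huv1; simp [h])
    have hT : T ≠ [] := by rintro rfl; exact hz hw.symm
    obtain ⟨u1, e, v1, e', h1, h2, h3, h4⟩ := hS.greendlinger hSC hT
    rw [hw] at h1
    have hρ : e ++ (v1 ++ v ++ u ++ u1) ∈ Rs := by
      have := hSC.rot (u ++ u1) (e ++ v1 ++ v) (by rw [h1] at hr; simpa using hr)
      simpa using this
    have heq : e ++ e' = e ++ (v1 ++ v ++ u ++ u1) := by
      by_contra hne
      have := hSC.pc _ h2 _ hρ hne e ⟨_, rfl⟩ ⟨_, rfl⟩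
      simp at this; omega
    have heq := List.append_cancel_left heq
    have h5 : ALe Rs (FreeGroup.mk (v ++ u)) (Fintype.card I - 1) := by
      have := h4.inv hSC.inv
      rw [heq] at this
      convert this using 1
      simp only [mk_app]; group
    have hl1 := congrArg List.length h1
    have hl2 := congrArg List.length heq
    simp at hl1 hl2
    refine ih [] (v ++ u) z (by simp; omega) ?_ ?_ (by simpa using hz) _ ?_ h5
    · have := hSC.rot (u ++ z) v hr
      have h6 := hSC.rot (v ++ u) z (by simpa using this)
      have h7 := hSC.rot z (v ++ u) h6
      simpa using h7
    · intro h; apply huv; simp at h; simp [h]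
    · omega

lemma emb_split {I J : Type} (f : I → J) (A B : List (Tag α Q I)) : ∃ A' B', emb f (A ++ B) = A' ++ B' ∧
    wd A' = wd A ∧ wd B' = wd B ∧ (∀ a ∈ A', ∃ b ∈ A, a.id = f b.id) ∧
    (∀ h ∈ B'.head?, ∃ h0 ∈ B.head?, h.p = h0.p) := by
  cases A with
  | nil =>
    refine ⟨[], emb f B, rfl, rfl, wd_emb _ _, by simp, ?_⟩
    intro h hh
    obtain ⟨a, ha, rfl⟩ := head_emb _ _ hh
    exact ⟨a, ha, rfl⟩
  | cons a A =>
    refine ⟨emb f (a :: A), B.map (Tag.mp f), by simp [emb, flagH], wd_emb _ _, by simp [wd, Tag.mp, Function.comp_def], ?_, ?_⟩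
    · intro b hb
      simp [emb, flagH, Tag.mp] at hb
      rcases hb with rfl | ⟨c, hc, rfl⟩
      · exact ⟨a, by simp, rfl⟩
      · exact ⟨c, by simp [hc], rfl⟩
    · intro h hh
      cases B with
      | nil => simp at hh
      | cons b B => simp at hh ⊢; rw [← hh]; rfl

/-- inner recursion -/
lemma inner {Rs : Set (List (α × Bool))} (hSC : SC Rs) {ψ : FreeGroup α →* Q}
    {N : ℕ} (hC : ∀ M < N, Claim Rs ψ M) {w : List (α × Bool)} (g : Q)
    (hmin : ∀ n < N, ¬ ALe Rs (FreeGroup.mk w) n) (hI : Indec Rs w N) (hwr : FreeGroup.IsReduced w) :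
    ∀ (k : ℕ) (I : Type) [Fintype I] [DecidableEq I] (gc : I → Q) (rc : I → List (α × Bool)) (ic : I → ℕ)
      (Y Tt : List (Tag α Q I)) (v a' : List (α × Bool)) (c : I) (M : ℕ), Tt.length + v.length ≤ k →
      State Rs ψ gc rc ic (Y ++ Tt) → (∀ a ∈ Tt, a.id = c) → Y ≠ [] → (∀ a ∈ Y.head?, a.p = g) →
      wd Y ++ v = w → a' ++ wd Tt ∈ Rs → a' ≠ [] → (a' ++ wd Tt).length = (rc c).length →
      ALe Rs ((FreeGroup.mk (wd Tt))⁻¹ * FreeGroup.mk v) M → Fintype.card I + M = N →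
      ALe Rs (FreeGroup.mk (wd Y) * (FreeGroup.mk a')⁻¹) (Fintype.card I - 1) → HasState Rs ψ g w N := by
  classical
  have hRS := RS_of_claim hSC hC
  intro k
  induction k with
  | zero =>
    intro I _ _ gc rc ic Y Tt v a' c M hk hS _ _ hg hw _ _ _ _ hN _
    have hTt : Tt = [] := List.length_eq_zero_iff.1 (by omega)
    have hv : v = [] := List.length_eq_zero_iff.1 (by omega)
    subst hTt hv
    simp only [List.append_nil] at hS hw
    refine ⟨I, _, _, gc, rc, ic, Y, hS, hw, hg, ?_⟩
    have := hS.area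
    rw [hw] at this
    by_contra hne
    exact hmin _ (by omega) this
  | succ k ih =>
    intro I _ _ gc rc ic Y Tt v a' c M hk hS hid hY hg hw ha' ha'0 hlen hA hN hrem
    have hcard : 0 < Fintype.card I := Fintype.card_pos_iff.2 ⟨c⟩
    rcases Tt with _ | ⟨t0, Tt⟩
    · rcases v with _ | ⟨v0, v⟩
      · exact ih I gc rc ic Y [] [] a' c M (by simp) hS hid hY hg hw ha' ha'0 hlen hA hN hrem
      · exfalso
        have h1 := hS.area
        simp only [List.append_nil] at h1
        simp only [wd_nil, mk_nil', inv_one, one_mul] at hA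
        exact hI (wd Y) (v0 :: v) [] (by simp [hw]) (by simp) (by
          intro h; apply hY; rw [List.append_nil] at h
          exact List.map_eq_nil_iff.1 h) M _ hA (by rw [mk_nil', mul_one]; exact h1) (by omega)
    rcases v with _ | ⟨v0, v⟩
    · exfalso
      rw [mk_nil', mul_one] at hA
      have := hA.inv hSC.inv
      rw [inv_inv] at this
      exact hRS _ a' (wd (t0 :: Tt)) [] le_rfl (by simpa using ha') (by simp) (by simpa using ha'0) M (by omega) this
    by_cases heq : t0.l = v0
    · subst heq
      refine ih I gc rc ic (Y ++ [t0]) Tt v (a' ++ [t0.l]) c M (by simp at hk ⊢; omega) (by simpa using hS)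
        (fun a ha => hid a (by simp [ha])) (by simp) ?_ (by rw [← hw]; simp) (by simpa using ha') (by simp)
        (by simpa using hlen) ?_ hN ?_
      · intro a ha; apply hg a
        cases Y with
        | nil => exact absurd rfl hY
        | cons y Y => simpa using ha
      · convert hA using 1
        rw [wd_cons, mk_cons', mk_cons' t0.l v]; group
      · convert hrem using 1
        rw [wd_append, mk_app, mk_app, wd_cons, wd_nil]; group
    -- different letters: choose a minimal cut
    have hcut : ∃ L : ℕ, ∃ T1 T2 v1 v2 m1 m2, t0 :: Tt = T1 ++ T2 ∧ v0 :: v = v1 ++ v2 ∧ wd T1 ++ v1 ≠ [] ∧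
        ALe Rs ((FreeGroup.mk (wd T1))⁻¹ * FreeGroup.mk v1) m1 ∧
        ALe Rs ((FreeGroup.mk (wd T2))⁻¹ * FreeGroup.mk v2) m2 ∧ m1 + m2 ≤ M ∧ T1.length + v1.length = L :=
      ⟨_, t0 :: Tt, [], v0 :: v, [], M, 0, by simp, by simp, by simp, hA, by simpa [mk_nil'] using ALe.one, by simp, rfl⟩
    obtain ⟨T1, T2, v1, v2, m1', m2, hT12, hv12, hne, hA1', hA2, hm', hL⟩ := Nat.find_spec hcut
    have hLmin : ∀ L < Nat.find hcut, _ := fun L hL => Nat.find_min hcut hL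
    rw [← hL] at hLmin
    have hex : ∃ n, ALe Rs ((FreeGroup.mk (wd T1))⁻¹ * FreeGroup.mk v1) n := ⟨_, hA1'⟩
    obtain ⟨m1, hA1, hm1min, hm1⟩ : ∃ m1, ALe Rs ((FreeGroup.mk (wd T1))⁻¹ * FreeGroup.mk v1) m1 ∧
        (∀ n < m1, ¬ ALe Rs ((FreeGroup.mk (wd T1))⁻¹ * FreeGroup.mk v1) n) ∧ m1 ≤ m1' :=
      ⟨_, Nat.find_spec hex, fun n hn => Nat.find_min hex hn, Nat.find_min' hex hA1'⟩
    rw [hT12] at hS hid ha' hlen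
    rw [hv12] at hw
    have hS' := hS.area
    rw [wd_append, wd_append, mk_app, mk_app] at hS'
    have hYw : wd Y ≠ [] := fun h => hY (List.map_eq_nil_iff.1 h)
    have hv1 : v1 ≠ [] := by
      rintro rfl
      have h1 : T1 ≠ [] := by rintro rfl; simp at hne
      rw [mk_nil', mul_one] at hA1
      have := hA1.inv hSC.inv
      rw [inv_inv] at this
      exact hRS _ a' (wd T1) (wd T2) le_rfl (by simpa using ha') (fun h => h1 (List.map_eq_nil_iff.1 h))
        (by simp [ha'0]) m1 (by omega) this
    have hT1 : T1 ≠ [] := by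
      rintro rfl
      simp only [wd_nil, mk_nil', inv_one, one_mul] at hA1 hS'
      have h1 := hS'.mul hA2
      exact hI (wd Y) v1 v2 (by rw [← hw]; simp) hv1 (by simp [hYw]) m1 _ hA1 (by convert h1 using 1; group) (by omega)
    have hm1pos : 1 ≤ m1 := by
      by_contra h0
      have h0 : m1 = 0 := by omega
      rw [h0] at hA1
      have h1 := hA1.zero
      have h2 : FreeGroup.mk v1 = FreeGroup.mk (wd T1) := by
        rw [← mul_right_inj ((FreeGroup.mk (wd T1))⁻¹), h1]; group
      have h3 := red_uniq (hwr.subword ⟨wd Y, v2, by rw [← hw]; simp⟩)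
        ((hSC.red _ ha').subword ⟨a', wd T2, by simp⟩) h2
      obtain ⟨t1, T1', rfl⟩ := List.exists_cons_of_ne_nil hT1
      obtain ⟨x1, v1', rfl⟩ := List.exists_cons_of_ne_nil hv1
      simp at hT12 hv12 h3
      apply heq
      rw [hT12.1, hv12.1, h3.1]
    -- the sub diagram
    obtain ⟨h0, hh0⟩ : ∃ h0, h0 ∈ (T2 ++ Y).head? := by
      obtain ⟨b, L, hb⟩ := List.exists_cons_of_ne_nil (l := T2 ++ Y) (by simp [hY])
      exact ⟨b, by rw [hb]; rfl⟩
    obtain ⟨J, _, _, gc2, rc2, ic2, S, hS2, hwS, hgS, hcardJ⟩ := hC m1 (by omega) (invRev (wd T1) ++ v1) h0.p hm1pos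
      (by rw [mk_app, mk_invRev]; exact hA1) (by intro n hn; rw [mk_app, mk_invRev]; exact hm1min n hn) (by
      intro u z v' he hz huv n1 n2 hz1 hz2 h12
      rcases List.append_eq_append_iff.1 (show invRev (wd T1) ++ v1 = (u ++ z) ++ v' from he) with ⟨z', h1, h2⟩ | ⟨v'', h1, h2⟩
      · -- u ++ z = invRev t1 ++ z', v1 = z' ++ v'
        rcases List.append_eq_append_iff.1 h1 with ⟨z1, h3, h4⟩ | ⟨u'', h3, h4⟩
        · -- straddle
          have hl3 := congrArg List.length h3
          have hl2 := congrArg List.length h2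
          have hl4 := congrArg List.length h4
          have := List.length_pos_iff.2 huv
          simp [invRev_length] at hl3 hl2 this hl4
          obtain ⟨Ta, Tb, rfl, hTa, hTb⟩ : ∃ Ta Tb, T1 = Ta ++ Tb ∧ wd Ta = invRev z1 ∧ wd Tb = invRev u := by
            have h5 : wd T1 = invRev z1 ++ invRev u := by
              rw [← invRev_append, ← h3, invRev_invRev]
            exact List.map_eq_append_iff.1 h5
          have hla := congrArg List.length hTa
          rw [wd_length, invRev_length] at hla
          refine hLmin (Ta.length + z'.length) ?_ ⟨Ta, Tb ++ T2, z', v' ++ v2, n1, n2 + m2, by rw [hT12]; simp,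
            by rw [hv12, h2]; simp, ?_, ?_, ?_, by omega, rfl⟩
          · rw [hla, hl2, hl3]; omega
          · intro h; simp at h
            rw [h.2] at h4
            have : z1 = [] := by
              have h6 := h.1; rw [hTa] at h6; 
              have := congrArg List.length h6
              rw [invRev_length] at this
              exact List.length_eq_zero_iff.1 this
            rw [this] at h4; exact hz (by simpa using h4)
          · rw [hTa, mk_invRev, inv_inv, ← mk_app, ← h4]; exact hz1
          · have e := (hz2.conj (FreeGroup.mk (wd T2))).mul hA2
            convert e using 1
            rw [wd_append, hTb]; simp only [mk_app, mk_invRev]; group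
        · -- invRev t1 ++ u'' = u , z' = u''++ z
          refine hI (wd Y ++ u'') z (v' ++ v2) (by rw [← hw, h2, h4]; simp) hz (by simp [hYw]) n1
            (Fintype.card I + n2 + m2) hz1 ?_ (by omega)
          have e := (hS'.mul (hz2.conj (FreeGroup.mk (wd T2)))).mul hA2
          convert e using 1
          rw [h3]; simp only [mk_app, mk_invRev]; group
      · -- invRev t1 = u ++ z ++ v''
        have h5 : wd T1 = invRev v'' ++ invRev z ++ invRev u := by
          rw [← invRev_invRev (L₁ := wd T1), h1]; simp [invRev_append]
        refine hRS _ (a' ++ invRev v'') (invRev z) (invRev u ++ wd T2) le_rfl ?_ ?_ (by simp [ha'0]) n1 (by omega) ?_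
        · rw [wd_append, h5] at ha'; simpa using ha'
        · intro h; apply hz
          have := congrArg List.length h
          rw [invRev_length] at this
          exact List.length_eq_zero_iff.1 this
        · rw [mk_invRev]; exact hz1.inv hSC.inv)
    obtain ⟨S1, S2, rfl, hS1, hS2w⟩ := List.map_eq_append_iff.1 hwS
    change wd S1 = _ at hS1
    change wd S2 = _ at hS2w
    have hS1ne : S1 ≠ [] := by
      rintro rfl
      have := congrArg List.length hS1
      rw [invRev_length] at this
      simp at this
      exact hT1 (List.length_eq_zero_iff.1 this.symm)
    have hS2ne : S2 ≠ [] := by rintro rfl; exact hv1 hS2w.symm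
    have D1 : State Rs ψ gc rc ic ((T2 ++ Y) ++ T1) := by
      have : State Rs ψ gc rc ic ((Y ++ T1) ++ T2) := by simpa using hS
      simpa using this.rot
    have hTl : S1.length = T1.length := by
      have := congrArg List.length hS1
      rwa [wd_length, invRev_length, wd_length] at this
    have hG := glue hSC D1 hS2 (by simp [hY]) hT1 hS1ne hS2ne c (fun a ha => hid a (by simp [ha])) hS1
      (by
        intro a ha y hy
        rw [Option.mem_def.1 hh0] at hy
        simp at hy
        rw [← hy]
        apply hgS a
        cases S1 with
        | nil => exact absurd rfl hS1ne
        | cons s S1 => simpa using ha)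
      (invRev a' ++ invRev (wd T2)) (by
        have h1 := hSC.inv _ ha'
        rw [wd_append, invRev_append, invRev_append, List.append_assoc] at h1
        have h2 := hSC.rot _ _ h1
        rw [hS1]; simpa using h2)
      (by rw [← hlen]; simp [invRev_length, hTl]; omega)
      (by
        have := hrem.conj (FreeGroup.mk (wd T2))⁻¹
        convert this using 1
        simp only [wd_append, mk_app, mk_invRev]; group)
      (by
        intro n hn hcon
        apply hmin (n + m2) (by omega)
        have := (hcon.conj (FreeGroup.mk (wd T2))).mul hA2
        convert this using 1
        rw [← hw, hS2w]; simp only [wd_append, mk_app]; group)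
    obtain ⟨A', B', hAB, hA'w, hB'w, hA'id, hB'h⟩ := emb_split (Sum.inl : I → I ⊕ J) T2 Y
    rw [hAB, List.append_assoc] at hG
    have hG := hG.rot
    refine ih (I ⊕ J) _ _ _ (B' ++ emb Sum.inr S2) A' v2 (a' ++ wd T1) (Sum.inl c) (N - Fintype.card I - m1) ?_
      hG ?_ ?_ ?_ ?_ ?_ ?_ ?_ ?_ ?_ ?_
    · have h1 := congrArg List.length hT12
      have h2 := congrArg List.length hv12
      have h3 := List.length_pos_iff.2 hv1
      have h4 := congrArg List.length hA'w
      simp at h1 h2 hk h4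
      omega
    · intro a ha
      obtain ⟨b, hb, hab⟩ := hA'id a ha
      rw [hab, hid b (by simp [hb])]
    · intro h; simp at h; rw [h.1] at hB'w; exact hYw hB'w.symm
    · intro a ha
      have : B' ≠ [] := by rintro rfl; exact hYw hB'w.symm
      obtain ⟨b, B'', rfl⟩ := List.exists_cons_of_ne_nil this
      obtain ⟨y, hy, hyp⟩ := hB'h b (by simp)
      simp at ha
      rw [← ha, hyp]; exact hg y hy
    · rw [← hw, wd_append, wd_emb, hS2w, hB'w]; simp
    · rw [hA'w]; simpa using ha'
    · simp [ha'0]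
    · rw [hA'w]
      simp only [Sum.elim_inl]
      rw [← hlen]; simp
    · rw [hA'w]; exact hA2.mono (by omega)
    · rw [Fintype.card_sum]; omega
    · rw [Fintype.card_sum]
      have h1 := hA1.swap
      have h2 := h1.conj (FreeGroup.mk a')⁻¹
      have h3 := (hrem.mul h2).mono (m := Fintype.card I + Fintype.card J - 1) (by omega)
      convert h3 using 1
      rw [wd_append, wd_emb, hB'w, hS2w]; simp only [mk_app]; group

lemma claim {Rs : Set (List (α × Bool))} (hSC : SC Rs) {ψ : FreeGroup α →* Q}
    (hψ : ∀ r ∈ Rs, ψ (FreeGroup.mk r) = 1) : ∀ N, Claim Rs ψ N := by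
  intro N
  induction N using Nat.strong_induction_on with
  | _ N hC =>
  intro w g hN hA hmin hI
  have hwr := indec_reduced hN hA hmin hI
  rcases w with _ | ⟨x, v0⟩
  · exact absurd ALe.one (hmin 0 (by omega))
  obtain ⟨L, hL, hLR, hbp⟩ := hA
  rcases lemmaF hSC _ L rfl hLR x v0 hwr hbp with ⟨s, hs, n', hn', hA'⟩ |
    ⟨t, _, Z, B, LZ, LB, e1, e2, e3, e4, e5, e6, -⟩
  · have hb := baseState hSC hψ g hs
    have hbT : baseT ψ g [] (x :: s) = [⟨g * ψ (FreeGroup.mk []), x, s ++ [], (), false⟩] ++ baseT ψ g [x] s := by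
      simp [baseT]
    rw [hbT] at hb
    refine inner hSC hC g hmin hI hwr _ Unit _ _ _ _ _ v0 [x] () (N - 1) le_rfl hb (fun _ _ => rfl) (by simp) ?_ ?_ ?_ ?_ ?_ ?_ ?_ ?_
    · simp [mk_nil']
    · simp
    · rw [wd_baseT]; exact hs
    · simp
    · rw [wd_baseT]; simp
    · rw [wd_baseT]; exact hA'.mono (by omega)
    · simp; omega
    · have := @ALe.one α _ Rs
      convert this using 1
      simp [wd, -mul_mk, -inv_mk]
  · exfalso
    by_cases hZ : Z = []
    · subst hZ
      rw [e1] at hwr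
      have : x :: ([] ++ nx x :: B) = [x] ++ (nx x :: B) := rfl
      rw [this, red_app] at hwr
      exact hwr.2.2 x (by simp) (nx x) (by simp) rfl
    · refine hI [x] Z (nx x :: B) (by rw [e1]; simp) hZ (by simp) LZ.length LB.length ⟨LZ, le_rfl, e2, e4⟩ ⟨LB, le_rfl, e3, ?_⟩ (by omega)
      rw [mk_cons' (nx x) B, mk_nx, e5]; group

end greend
set_option linter.unusedSectionVars false
set_option linter.style.longLine false
section dehnalg
variable {α : Type*} [DecidableEq α] {Q : Type*} [Group Q]
open FreeGroup

lemma hasState_min {Rs : Set (List (α × Bool))} (hSC : SC Rs) {ψ : FreeGroup α →* Q}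
    (hψ : ∀ r ∈ Rs, ψ (FreeGroup.mk r) = 1) {w : List (α × Bool)} (hw : FreeGroup.mk w ≠ 1)
    (hcl : ∃ n, ALe Rs (FreeGroup.mk w) n)
    (hind : ∀ u z v, w = u ++ z ++ v → z ≠ [] → u ++ v ≠ [] → ¬ ∃ n, ALe Rs (FreeGroup.mk z) n) (g : Q) :
    ∃ N, HasState Rs ψ g w N := by
  classical
  refine ⟨Nat.find hcl, claim hSC hψ _ w g ?_ (Nat.find_spec hcl) (fun n hn => Nat.find_min hcl hn) ?_⟩
  · by_contra h0
    have h0 : Nat.find hcl = 0 := by omega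
    have h1 := Nat.find_spec hcl
    rw [h0] at h1
    exact hw h1.zero
  · intro u z v h1 h2 h3 n1 _ h4 _ _
    exact hind u z v h1 h2 h3 ⟨n1, h4⟩

lemma dehn_step {Rs : Set (List (α × Bool))} (hSC : SC Rs) : ∀ (l : ℕ) (z : List (α × Bool)), z.length ≤ l →
    FreeGroup.IsReduced z → z ≠ [] → (∃ n, ALe Rs (FreeGroup.mk z) n) →
    ∃ u e v e', z = u ++ e ++ v ∧ e ++ e' ∈ Rs ∧ e'.length < e.length := by
  intro l
  induction l with
  | zero => intro z h1 _ h2; exact absurd (List.length_eq_zero_iff.1 (Nat.le_zero.1 h1)) h2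
  | succ l ih =>
    intro z hl hr hz hcl
    by_cases hind : ∀ u z' v, z = u ++ z' ++ v → z' ≠ [] → u ++ v ≠ [] → ¬ ∃ n, ALe Rs (FreeGroup.mk z') n
    · obtain ⟨N, I, _, _, gc, rc, ic, T, hS, hw, -, -⟩ := hasState_min (Q := Unit) hSC (ψ := 1) (fun _ _ => rfl) (w := z)
        (fun h => hz (red_uniq hr (by simp [FreeGroup.IsReduced]) h)) hcl hind ()
      have hT : T ≠ [] := by rintro rfl; exact hz hw.symm
      obtain ⟨u, e, v, e', h1, h2, h3, _⟩ := hS.greendlinger hSC hT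
      exact ⟨u, e, v, e', by rw [← hw, h1], h2, h3⟩
    · push Not at hind
      obtain ⟨u, z', v, h1, h2, h3, h4⟩ := hind
      have hl1 := congrArg List.length h1
      have := List.length_pos_iff.2 h3
      simp at hl1 this
      obtain ⟨u1, e, v1, e', h5, h6, h7⟩ := ih z' (by omega) (hr.subword ⟨u, v, h1.symm⟩) h2 h4
      exact ⟨u ++ u1, e, v1 ++ v, e', by rw [h1, h5]; simp, h6, h7⟩

/-- short relators -/
def Rsh (Rs : Set (List (α × Bool))) (K : ℕ) : Set (List (α × Bool)) := {r | r ∈ Rs ∧ r.length ≤ K}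

lemma SC.short {Rs : Set (List (α × Bool))} (h : SC Rs) (K : ℕ) : SC (Rsh Rs K) where
  rot := fun u v hr => ⟨h.rot u v hr.1, by have := hr.2; simp at this ⊢; omega⟩
  inv := fun r hr => ⟨h.inv r hr.1, by rw [invRev_length]; exact hr.2⟩
  red := fun r hr => h.red r hr.1
  ne := fun r hr => h.ne r hr.1
  pc := fun r hr s hs => h.pc r hr.1 s hs.1

lemma dehn_closure {Rs : Set (List (α × Bool))} (hSC : SC Rs) {K : ℕ} : ∀ (l : ℕ) (g : FreeGroup α), g.norm ≤ l →
    2 * l ≤ K → g ∈ Subgroup.normalClosure (FreeGroup.mk '' Rs) →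
    g ∈ Subgroup.normalClosure (FreeGroup.mk '' (Rsh Rs K)) := by
  intro l
  induction l with
  | zero =>
    intro g hg _ _
    rw [Nat.le_zero, FreeGroup.norm_eq_zero] at hg
    rw [hg]; exact one_mem _
  | succ l ih =>
    intro g hg hK hmem
    by_cases h1 : g = 1
    · rw [h1]; exact one_mem _
    obtain ⟨n, hn⟩ := ALe_of_mem hSC.inv hmem
    obtain ⟨u, e, v, e', h2, h3, h4⟩ := dehn_step hSC _ g.toWord le_rfl (isReduced_toWord) (by simpa using h1)
      ⟨n, by rw [mk_toWord]; exact hn⟩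
    have hlen := congrArg List.length h2
    have hgl : g.toWord.length ≤ l + 1 := hg
    simp at hlen
    have hg2 : g = FreeGroup.mk u * FreeGroup.mk e * FreeGroup.mk v := by
      rw [← mk_app, ← mk_app, ← h2, mk_toWord]
    have hsh : e ++ e' ∈ Rsh Rs K := ⟨h3, by simp; omega⟩
    have e1 : g = (FreeGroup.mk u * FreeGroup.mk (e ++ e') * (FreeGroup.mk u)⁻¹) *
        (FreeGroup.mk (u ++ invRev e' ++ v)) := by
      rw [hg2]; simp only [mk_app, mk_invRev]; group
    have m1 : FreeGroup.mk (e ++ e') ∈ Subgroup.normalClosure (FreeGroup.mk '' (Rsh Rs K)) :=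
      Subgroup.subset_normalClosure ⟨_, hsh, rfl⟩
    have m2 := Subgroup.normalClosure_normal.conj_mem _ m1 (FreeGroup.mk u)
    have m1' : FreeGroup.mk (e ++ e') ∈ Subgroup.normalClosure (FreeGroup.mk '' Rs) :=
      Subgroup.subset_normalClosure ⟨_, h3, rfl⟩
    have m2' := Subgroup.normalClosure_normal.conj_mem _ m1' (FreeGroup.mk u)
    rw [e1]
    refine mul_mem m2 (ih _ ?_ (by omega) ?_)
    · refine norm_mk_le.trans ?_
      simp [invRev_length]; omega
    · rw [e1] at hmem
      exact (Subgroup.mul_mem_cancel_left _ m2').1 hmem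

end dehnalg
set_option linter.unusedSectionVars false
set_option linter.style.longLine false
section lens
variable {α : Type*} [DecidableEq α] {Q : Type*} [Group Q]
open FreeGroup

/-- word length -/
noncomputable def len (ψ : FreeGroup α →* Q) (h : Q) : ℕ :=
  sInf {n | ∃ s : List (α × Bool), s.length = n ∧ ψ (FreeGroup.mk s) = h}

lemma len_le (ψ : FreeGroup α →* Q) (s : List (α × Bool)) : len ψ (ψ (FreeGroup.mk s)) ≤ s.length :=
  Nat.sInf_le ⟨s, rfl, rfl⟩

lemma exists_geo {ψ : FreeGroup α →* Q} (hs : Surjective ψ) (h : Q) :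
    ∃ s : List (α × Bool), s.length = len ψ h ∧ ψ (FreeGroup.mk s) = h := by
  obtain ⟨g, rfl⟩ := hs h
  have : {n | ∃ s : List (α × Bool), s.length = n ∧ ψ (FreeGroup.mk s) = ψ g}.Nonempty :=
    ⟨_, g.toWord, rfl, by rw [mk_toWord]⟩
  exact Nat.sInf_mem this

lemma len_mul {ψ : FreeGroup α →* Q} (hs : Surjective ψ) (g h : Q) : len ψ (g * h) ≤ len ψ g + len ψ h := by
  obtain ⟨s, h1, h2⟩ := exists_geo hs g
  obtain ⟨t, h3, h4⟩ := exists_geo hs h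
  have := len_le ψ (s ++ t)
  rw [mk_app, _root_.map_mul, h2, h4, List.length_append] at this
  omega

lemma len_inv_le {ψ : FreeGroup α →* Q} (hs : Surjective ψ) (g : Q) : len ψ g⁻¹ ≤ len ψ g := by
  obtain ⟨s, h1, h2⟩ := exists_geo hs g
  have := len_le ψ (invRev s)
  rw [mk_invRev, _root_.map_inv, h2, invRev_length] at this
  omega

lemma len_inv {ψ : FreeGroup α →* Q} (hs : Surjective ψ) (g : Q) : len ψ g⁻¹ = len ψ g := by
  apply le_antisymm (len_inv_le hs g)
  simpa using len_inv_le hs g⁻¹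

lemma len_one (ψ : FreeGroup α →* Q) : len ψ 1 = 0 := by
  have := len_le ψ []
  rw [mk_nil', _root_.map_one] at this
  simpa using this

lemma len_eq_zero {ψ : FreeGroup α →* Q} (hs : Surjective ψ) {g : Q} (h : len ψ g = 0) : g = 1 := by
  obtain ⟨s, h1, h2⟩ := exists_geo hs g
  rw [h] at h1
  rw [List.length_eq_zero_iff.1 h1, mk_nil', _root_.map_one] at h2
  exact h2.symm

/-- geodesic word -/
def Geo (ψ : FreeGroup α →* Q) (s : List (α × Bool)) : Prop := s.length ≤ len ψ (ψ (FreeGroup.mk s))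

lemma Geo.subw {ψ : FreeGroup α →* Q} (hs : Surjective ψ) {u z v : List (α × Bool)} (h : Geo ψ (u ++ z ++ v)) : Geo ψ z := by
  unfold Geo at *
  have h1 := len_le ψ u
  have h2 := len_le ψ v
  rw [mk_app, mk_app, _root_.map_mul, _root_.map_mul] at h
  have h3 := len_mul hs (ψ (FreeGroup.mk u) * ψ (FreeGroup.mk z)) (ψ (FreeGroup.mk v))
  have h4 := len_mul hs (ψ (FreeGroup.mk u)) (ψ (FreeGroup.mk z))
  simp only [List.length_append] at h
  omega

lemma Geo.nil_of_closed {ψ : FreeGroup α →* Q} {z : List (α × Bool)} (h : Geo ψ z)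
    (h1 : ψ (FreeGroup.mk z) = 1) : z = [] := by
  unfold Geo at h
  rw [h1, len_one] at h
  exact List.length_eq_zero_iff.1 (Nat.le_zero.1 h)

/-- two sides with a middle side come close -/
def Near (ψ : FreeGroup α →* Q) (D : ℕ) (a b c : List (α × Bool)) : Prop :=
  ∃ u v u' v', a = u ++ v ∧ c = u' ++ v' ∧ len ψ (ψ (FreeGroup.mk (v ++ b ++ u'))) ≤ D

/-- neighbourhood of a side -/
def NB (ψ : FreeGroup α →* Q) (b : Q) (s : List (α × Bool)) (τ : ℕ) (p : Q) : Prop :=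
  ∃ u, u <+: s ∧ len ψ ((b * ψ (FreeGroup.mk u))⁻¹ * p) ≤ τ

lemma NB.trans {ψ : FreeGroup α →* Q} (hs : Surjective ψ) {b s τ p q σ} (h : NB ψ b s τ p)
    (h1 : len ψ (p⁻¹ * q) ≤ σ) : NB ψ b s (τ + σ) q := by
  obtain ⟨u, hu, h2⟩ := h
  refine ⟨u, hu, ?_⟩
  have := len_mul hs ((b * ψ (FreeGroup.mk u))⁻¹ * p) (p⁻¹ * q)
  have e : (b * ψ (FreeGroup.mk u))⁻¹ * p * (p⁻¹ * q) = (b * ψ (FreeGroup.mk u))⁻¹ * q := by group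
  rw [e] at this
  omega

lemma NB.mono {ψ : FreeGroup α →* Q} {b s τ p σ} (h : NB ψ b s τ p)
    (h1 : τ ≤ σ) : NB ψ b s σ p := by
  obtain ⟨u, hu, h2⟩ := h
  exact ⟨u, hu, by omega⟩

lemma NB.self {ψ : FreeGroup α →* Q} {b s u} (h : u <+: s) (τ) : NB ψ b s τ (b * ψ (FreeGroup.mk u)) :=
  ⟨u, h, by rw [inv_mul_cancel, len_one]; omega⟩

lemma NB.near {ψ : FreeGroup α →* Q} (hs : Surjective ψ) {b a c m τ p σ D} (h : NB ψ b a τ p)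
    (h' : NB ψ (b * ψ (FreeGroup.mk (a ++ m))) c σ p) (hD : τ + σ ≤ D) : Near ψ D a m c := by
  obtain ⟨u, ⟨v, hu⟩, h2⟩ := h
  obtain ⟨u', ⟨v', hu'⟩, h2'⟩ := h'
  refine ⟨u, v, u', v', hu.symm, hu'.symm, ?_⟩
  rw [← len_inv hs] at h2'
  have := len_mul hs ((b * ψ (FreeGroup.mk u))⁻¹ * p) ((b * ψ (FreeGroup.mk (a ++ m)) * ψ (FreeGroup.mk u'))⁻¹ * p)⁻¹
  have e : (b * ψ (FreeGroup.mk u))⁻¹ * p * ((b * ψ (FreeGroup.mk (a ++ m)) * ψ (FreeGroup.mk u'))⁻¹ * p)⁻¹ =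
      ψ (FreeGroup.mk (v ++ m ++ u')) := by
    rw [← hu]; simp only [mk_app, _root_.map_mul]; group
  rw [e] at this
  omega

lemma pathSum_zero (ψ : FreeGroup α →* Q) (θ : Q → α × Bool → ℤ) (r) : ∀ g,
    (∀ q x s, r = q ++ x :: s → θ (g * ψ (FreeGroup.mk q)) x = 0) → pathSum ψ θ g r = 0 := by
  induction r with
  | nil => intro g _; rfl
  | cons y r ih =>
    intro g h
    have h0 := h [] y r rfl
    rw [mk_nil', _root_.map_one, mul_one] at h0
    rw [pathSum, h0, zero_add]
    apply ih
    intro q x s hr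
    have := h (y :: q) x s (by rw [hr]; rfl)
    rwa [mk_cons', _root_.map_mul, ← mul_assoc] at this

lemma pathSum_tele (ψ : FreeGroup α →* Q) (θ : Q → α × Bool → ℤ) (f : Q → ℤ) (r) : ∀ g,
    (∀ q x s, r = q ++ x :: s → θ (g * ψ (FreeGroup.mk q)) x =
      f (g * ψ (FreeGroup.mk q)) - f (g * ψ (FreeGroup.mk (q ++ [x])))) →
    pathSum ψ θ g r = f g - f (g * ψ (FreeGroup.mk r)) := by
  induction r with
  | nil => intro g _; rw [mk_nil', _root_.map_one, mul_one]; simp [pathSum]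
  | cons y r ih =>
    intro g h
    have h0 := h [] y r rfl
    rw [mk_nil', _root_.map_one, mul_one, List.nil_append] at h0
    rw [pathSum, h0, ih]
    · rw [mk_cons' y r, _root_.map_mul, ← mul_assoc]; ring
    intro q x s hr
    have := h (y :: q) x s (by rw [hr]; rfl)
    rw [List.cons_append, mk_cons', mk_cons' y (q ++ [x]), _root_.map_mul, _root_.map_mul, ← mul_assoc, ← mul_assoc] at this
    exact this

end lens
set_option linter.unusedSectionVars false
set_option linter.style.longLine false
section quad
variable {α : Type*} [DecidableEq α] {Q : Type*} [Group Q]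
open FreeGroup
variable {I : Type} [Fintype I] [DecidableEq I] {Rs : Set (List (α × Bool))} {ψ : FreeGroup α →* Q}
    {gc : I → Q} {rc : I → List (α × Bool)} {ic : I → ℕ} {T : List (Tag α Q I)}

lemma chain_midpart {β : Type*} {r : β → β → Prop} {A S B : List β} (h : (A ++ S ++ B).IsChain r) : S.IsChain r := by
  rw [List.isChain_append, List.isChain_append] at h
  exact h.1.2.1

lemma no_run (hs : Surjective ψ) (hψ : ∀ r ∈ Rs, ψ (FreeGroup.mk r) = 1) (h : State Rs ψ gc rc ic T)
    {A S B} (hT : T = A ++ S ++ B) (hg : Geo ψ (wd S)) {c} (hh : ∀ a ∈ S.head?, a.id ≠ c) (hb : bc c S = 1)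
    (hl : (rc c).length < 2 * idc c S) : False := by
  have hch := h.cyc.1
  rw [hT] at hch
  obtain ⟨U, a, R, V, h1, h2, h3, h4⟩ := seg_one (ψ := ψ) S (chain_midpart hch) hh hb
  obtain ⟨e, e', v, h5, h6, h7, -, -⟩ := h.run (U := A ++ U) (a := a) (R := R) (V := V ++ B)
    (by rw [hT, h1]; simp) h3 (by rw [h2]; omega)
  have h8 : wd S = wd U ++ e ++ (v ++ wd V) := by
    rw [h1, wd_append, ← List.cons_append, wd_append, h5]; simp
  rw [h8] at hg
  have h9 := hg.subw hs
  have h10 := hψ _ h6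
  rw [mk_app, _root_.map_mul] at h10
  unfold Geo at h9
  rw [mul_eq_one_iff_eq_inv.1 h10, len_inv hs] at h9
  have := len_le ψ e'
  omega

lemma pos_cell (hs : Surjective ψ) (hSC : SC Rs) (hψ : ∀ r ∈ Rs, ψ (FreeGroup.mk r) = 1) (h : State Rs ψ gc rc ic T)
    {T1 T2 T3 T4} (hT : T = T1 ++ T2 ++ T3 ++ T4) (g1 : Geo ψ (wd T1)) (g2 : Geo ψ (wd T2)) (g3 : Geo ψ (wd T3))
    (g4 : Geo ψ (wd T4)) {c} (hc1 : ∀ a ∈ T1.head?, a.id ≠ c) (hc2 : ∀ a ∈ T2.head?, a.id ≠ c)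
    (hc3 : ∀ a ∈ T3.head?, a.id ≠ c) (hc4 : ∀ a ∈ T4.head?, a.id ≠ c) :
    (6 : ℤ) - 2 * (bc c T : ℤ) - ic c ≤ 0 := by
  by_contra hpos
  push Not at hpos
  have hch := h.cyc.1
  rw [hT] at hch
  have k1 : T1.IsChain (Sc ψ) := chain_midpart (A := []) (B := T2 ++ T3 ++ T4) (by simpa using hch)
  have k2 : T2.IsChain (Sc ψ) := chain_midpart (A := T1) (B := T3 ++ T4) (by simpa using hch)
  have k3 : T3.IsChain (Sc ψ) := chain_midpart (A := T1 ++ T2) (B := T4) (by simpa using hch)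
  have k4 : T4.IsChain (Sc ψ) := chain_midpart (A := T1 ++ T2 ++ T3) (B := []) (by simpa using hch)
  have z1 := seg_zero T1 k1 hc1
  have z2 := seg_zero T2 k2 hc2
  have z3 := seg_zero T3 k3 hc3
  have z4 := seg_zero T4 k4 hc4
  have hb : bc c T = bc c T1 + bc c T2 + bc c T3 + bc c T4 := by rw [hT, bc_append, bc_append, bc_append]
  have hi : idc c T = idc c T1 + idc c T2 + idc c T3 + idc c T4 := by rw [hT, idc_append, idc_append, idc_append]
  have hbr := h.brks c
  have hun := h.untouched hSC (c := c)
  have hb1 : bc c T = 1 := by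
    by_contra hne
    have hb0 : bc c T = 0 := by omega
    have := hun (by rw [hi, z1 (by omega), z2 (by omega), z3 (by omega), z4 (by omega)])
    omega
  have hhalf := h.half hSC (c := c) (by omega)
  rcases (by omega : (bc c T1 = 1 ∧ bc c T2 = 0 ∧ bc c T3 = 0 ∧ bc c T4 = 0) ∨
    (bc c T1 = 0 ∧ bc c T2 = 1 ∧ bc c T3 = 0 ∧ bc c T4 = 0) ∨
    (bc c T1 = 0 ∧ bc c T2 = 0 ∧ bc c T3 = 1 ∧ bc c T4 = 0) ∨
    (bc c T1 = 0 ∧ bc c T2 = 0 ∧ bc c T3 = 0 ∧ bc c T4 = 1)) with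
    ⟨b1, b2, b3, b4⟩ | ⟨b1, b2, b3, b4⟩ | ⟨b1, b2, b3, b4⟩ | ⟨b1, b2, b3, b4⟩
  · exact no_run hs hψ h (A := []) (B := T2 ++ T3 ++ T4) (by simpa using hT) g1 hc1 b1
      (by rw [z2 b2, z3 b3, z4 b4] at hi; omega)
  · exact no_run hs hψ h (A := T1) (B := T3 ++ T4) (by simpa using hT) g2 hc2 b2
      (by rw [z1 b1, z3 b3, z4 b4] at hi; omega)
  · exact no_run hs hψ h (A := T1 ++ T2) (B := T4) (by simpa using hT) g3 hc3 b3
      (by rw [z1 b1, z2 b2, z4 b4] at hi; omega)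
  · exact no_run hs hψ h (A := T1 ++ T2 ++ T3) (B := []) (by simpa using hT) g4 hc4 b4
      (by rw [z1 b1, z2 b2, z3 b3] at hi; omega)

lemma count_untouched (hs : Surjective ψ) (hSC : SC Rs) (hψ : ∀ r ∈ Rs, ψ (FreeGroup.mk r) = 1) (h : State Rs ψ gc rc ic T)
    {T1 T2 T3 T4} (hT : T = T1 ++ T2 ++ T3 ++ T4) (g1 : Geo ψ (wd T1)) (g2 : Geo ψ (wd T2)) (g3 : Geo ψ (wd T3))
    (g4 : Geo ψ (wd T4)) : (Finset.univ.filter fun c => idc c T = 0).card ≤ 18 := by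
  classical
  let P : Finset I := ((T1.head?.toList ++ T2.head?.toList ++ T3.head?.toList ++ T4.head?.toList).map Tag.id).toFinset
  have hl : ∀ S : List (Tag α Q I), S.head?.toList.length ≤ 1 := by intro S; cases S <;> simp
  have hP : P.card ≤ 4 := by
    refine (List.toFinset_card_le _).trans ?_
    have := hl T1; have := hl T2; have := hl T3; have := hl T4
    simp only [List.length_map, List.length_append]; omega
  have hk := h.kappa
  have hle : ∑ c, (6 - 2 * (bc c T : ℤ) - ic c) ≤
      ∑ c, (6 * (if c ∈ P then (1 : ℤ) else 0) - (if idc c T = 0 then 1 else 0)) := by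
    apply Finset.sum_le_sum
    intro c _
    by_cases hc : idc c T = 0
    · have := h.untouched hSC hc
      rw [if_pos hc]
      split_ifs <;> omega
    · rw [if_neg hc]
      by_cases hcP : c ∈ P
      · rw [if_pos hcP]; omega
      · rw [if_neg hcP]
        have hx : ∀ a, a ∈ T1.head? ∨ a ∈ T2.head? ∨ a ∈ T3.head? ∨ a ∈ T4.head? → a.id ≠ c := by
          intro a ha hac
          apply hcP
          simp only [P, List.mem_toFinset, List.mem_map, List.mem_append, Option.mem_toList]
          exact ⟨a, by tauto, hac⟩
        have := pos_cell hs hSC hψ h hT g1 g2 g3 g4 (c := c) (fun a ha => hx a (by tauto)) (fun a ha => hx a (by tauto))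
          (fun a ha => hx a (by tauto)) (fun a ha => hx a (by tauto))
        omega
  have hle := hk.trans hle
  rw [Finset.sum_sub_distrib, ← Finset.mul_sum, Finset.sum_ite_mem, Finset.univ_inter, Finset.sum_const,
    Finset.sum_boole] at hle
  simp at hle
  omega

end quad
set_option linter.unusedSectionVars false
set_option linter.style.longLine false
section flux
variable {α : Type*} [DecidableEq α] {Q : Type*} [Group Q]
open FreeGroup
variable {I : Type} [Fintype I] [DecidableEq I] {Rs : Set (List (α × Bool))} {ψ : FreeGroup α →* Q}
    {gc : I → Q} {rc : I → List (α × Bool)} {ic : I → ℕ} {T : List (Tag α Q I)}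

open Classical in
/-- the cut cochain: crossing edges of `U` inside `N` -/
noncomputable def cutθ (ψ : FreeGroup α →* Q) (U N : Q → Prop) (p : Q) (x : α × Bool) : ℤ :=
  if N p ∧ N (p * ψ (FreeGroup.mk [x])) then
    (if U p then 1 else 0) - (if U (p * ψ (FreeGroup.mk [x])) then 1 else 0) else 0

lemma cutθ_AS (ψ : FreeGroup α →* Q) (U N : Q → Prop) : AS ψ (cutθ ψ U N) := by
  intro p x
  have e : p * ψ (FreeGroup.mk [x]) * ψ (FreeGroup.mk [nx x]) = p := by
    rw [mk_nx, _root_.map_inv]; group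
  unfold cutθ
  rw [e]
  by_cases h1 : N p <;> by_cases h2 : N (p * ψ (FreeGroup.mk [x])) <;> simp [h1, h2]

lemma mk_snoc (ψ : FreeGroup α →* Q) (g : Q) (q x) : g * ψ (FreeGroup.mk (q ++ [x])) = g * ψ (FreeGroup.mk q) * ψ (FreeGroup.mk [x]) := by
  rw [mk_app, _root_.map_mul, mul_assoc]

/-- path with all vertices satisfying the same side of U -/
lemma cut_const (U N : Q → Prop) (r g) (h : (∀ q, q <+: r → U (g * ψ (FreeGroup.mk q))) ∨
    (∀ q, q <+: r → ¬ U (g * ψ (FreeGroup.mk q)))) : pathSum ψ (cutθ ψ U N) g r = 0 := by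
  apply pathSum_zero
  rintro q x s rfl
  unfold cutθ
  rw [← mk_snoc]
  rcases h with h | h
  · simp only [h q ⟨_, rfl⟩, h (q ++ [x]) ⟨s, by simp⟩]; simp
  · simp only [h q ⟨_, rfl⟩, h (q ++ [x]) ⟨s, by simp⟩]; simp

lemma cut_far (U N : Q → Prop) (r g) (h : ∀ q, q <+: r → ¬ N (g * ψ (FreeGroup.mk q))) :
    pathSum ψ (cutθ ψ U N) g r = 0 := by
  apply pathSum_zero
  rintro q x s rfl
  unfold cutθ
  exact if_neg (fun hn => h q ⟨_, rfl⟩ hn.1)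

open Classical in
lemma cut_near (U N : Q → Prop) (r g) (h : ∀ q, q <+: r → N (g * ψ (FreeGroup.mk q))) :
    pathSum ψ (cutθ ψ U N) g r = (if U g then 1 else 0) - (if U (g * ψ (FreeGroup.mk r)) then 1 else 0) := by
  apply pathSum_tele ψ _ (fun p => if U p then 1 else 0)
  rintro q x s rfl
  unfold cutθ
  rw [← mk_snoc, if_pos ⟨h q ⟨_, rfl⟩, h (q ++ [x]) ⟨s, by simp⟩⟩]

lemma cell_diam (hs : Surjective ψ) {r : List (α × Bool)} {g : Q} {K : ℕ} (hr : r.length ≤ K) {q q'} (h : q <+: r) (h' : q' <+: r) :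
    len ψ ((g * ψ (FreeGroup.mk q))⁻¹ * (g * ψ (FreeGroup.mk q'))) ≤ K := by
  have key : ∀ q q' : List (α × Bool), q <+: q' → q' <+: r → len ψ ((g * ψ (FreeGroup.mk q))⁻¹ * (g * ψ (FreeGroup.mk q'))) ≤ K := by
    rintro q _ ⟨t, rfl⟩ h'
    have e : (g * ψ (FreeGroup.mk q))⁻¹ * (g * ψ (FreeGroup.mk (q ++ t))) = ψ (FreeGroup.mk t) := by
      rw [mk_app, _root_.map_mul]; group
    rw [e]
    have := len_le ψ t
    have := h'.length_le
    simp at this; omega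
  rcases List.prefix_or_prefix_of_prefix h h' with h1 | h1
  · exact key _ _ h1 h'
  · rw [← len_inv hs, mul_inv_rev, inv_inv]
    exact key _ _ h1 h

/-- position of a tag on a side -/
lemma tag_pos {A S B : List (Tag α Q I)} (hch : (A ++ S ++ B).IsChain (Sc ψ)) (hh : ∀ a ∈ (A ++ S ++ B).head?, a.p = 1)
    {a} (ha : a ∈ S) : ∃ u, u <+: wd S ∧ a.p = ψ (FreeGroup.mk (wd A)) * ψ (FreeGroup.mk u) := by
  obtain ⟨U, V, rfl⟩ := List.append_of_mem ha
  refine ⟨wd U, ⟨wd (a :: V), by simp⟩, ?_⟩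
  have h1 : A ++ (U ++ a :: V) ++ B = [] ++ (A ++ U ++ [a]) ++ (V ++ B) := by simp
  rw [h1] at hch hh
  have := chain_end ψ (A ++ U) a 1 (chain_midpart hch) (by
    intro b hb; apply hh b
    rw [List.nil_append, List.head?_append_of_ne_nil _ (by simp)]; exact hb)
  rw [this, wd_append, mk_app, _root_.map_mul, one_mul]

lemma flux_core (hs : Surjective ψ) (hSC : SC Rs) (hψ : ∀ r ∈ Rs, ψ (FreeGroup.mk r) = 1) {K : ℕ}
    (hK : ∀ r ∈ Rs, r.length ≤ K) (h : State Rs ψ gc rc ic T)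
    {T1 T2 T3 T4} (hT : T = T1 ++ T2 ++ T3 ++ T4) (hh : ∀ a ∈ T.head?, a.p = 1)
    (g1 : Geo ψ (wd T1)) (g2 : Geo ψ (wd T2)) (g3 : Geo ψ (wd T3)) (g4 : Geo ψ (wd T4))
    (hn1 : ¬ Near ψ (20 * (K + 1)) (wd T1) (wd T2) (wd T3))
    (hn2 : ¬ Near ψ (20 * (K + 1)) (wd T2) (wd T3) (wd T4)) : False := by
  classical
  have hch := h.cyc.1
  set b2 := ψ (FreeGroup.mk (wd T1)) with hb2
  set b3 := ψ (FreeGroup.mk (wd T1 ++ wd T2)) with hb3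
  set b4 := ψ (FreeGroup.mk (wd T1 ++ wd T2 ++ wd T3)) with hb4
  have far13 : ∀ p τ σ, τ + σ ≤ 20 * (K + 1) → NB ψ 1 (wd T1) τ p → NB ψ b3 (wd T3) σ p → False := by
    intro p τ σ hts h1 h3
    refine hn1 (h1.near hs (σ := σ) (p := p) (m := wd T2) ?_ hts)
    rw [one_mul]; exact h3
  have far24 : ∀ p τ σ, τ + σ ≤ 20 * (K + 1) → NB ψ b2 (wd T2) τ p → NB ψ b4 (wd T4) σ p → False := by
    intro p τ σ hts h1 h3
    refine hn2 (h1.near hs (σ := σ) (p := p) (m := wd T3) ?_ hts)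
    rw [hb2, ← _root_.map_mul, ← mk_app, ← List.append_assoc]; exact h3
  -- choice of the level
  obtain ⟨j, hj⟩ : ∃ j : Fin 19, ∀ c, idc c T = 0 →
      (∀ q, q <+: rc c → NB ψ 1 (wd T1) ((K + 1) * (j + 1)) (gc c * ψ (FreeGroup.mk q))) ∨
      (∀ q, q <+: rc c → ¬ NB ψ 1 (wd T1) ((K + 1) * (j + 1)) (gc c * ψ (FreeGroup.mk q))) := by
    by_contra hcon
    push Not at hcon
    choose f hf0 hf1 hf2 using hcon
    have hinj : Injective f := by
      have key : ∀ i j : Fin 19, f i = f j → ¬ i < j := by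
        intro i j hij hlt
        obtain ⟨q, hq, h1⟩ := hf1 j
        obtain ⟨q', hq', h2⟩ := hf2 i
        rw [hij] at hq' h2
        apply h1
        refine (h2.trans hs (cell_diam hs (hK _ (h.rcR _)) hq' hq)).mono ?_
        have : (i : ℕ) + 1 ≤ j := hlt
        calc (K + 1) * ((i : ℕ) + 1) + K ≤ (K + 1) * ((i : ℕ) + 1 + 1) := by ring_nf; omega
          _ ≤ _ := Nat.mul_le_mul_left _ (by omega)
      intro i j hij
      rcases lt_trichotomy i j with h1 | h1 | h1
      · exact absurd h1 (key i j hij)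
      · exact h1
      · exact absurd h1 (key j i hij.symm)
    have h1 := count_untouched hs hSC hψ h hT g1 g2 g3 g4
    have h2 : (Finset.univ.image f).card ≤ 18 := by
      refine (Finset.card_le_card ?_).trans h1
      intro c hc
      obtain ⟨i, -, rfl⟩ := Finset.mem_image.1 hc
      simp [hf0 i]
    rw [Finset.card_image_of_injective _ hinj] at h2
    simp at h2
  set τ := (K + 1) * ((j : ℕ) + 1) with hτ
  have hτ1 : K + 1 ≤ τ := Nat.le_mul_of_pos_right _ (by omega)
  have hτ2 : τ ≤ 19 * (K + 1) := by rw [hτ, mul_comm]; exact Nat.mul_le_mul_right _ (by omega)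
  set U : Q → Prop := NB ψ 1 (wd T1) τ with hU
  set N : Q → Prop := NB ψ b2 (wd T2) K with hN
  have hflux := h.flux _ (cutθ_AS ψ U N)
  rw [chain_sum ψ _ T 1 hch hh] at hflux
  -- boundary sum
  have hL : pathSum ψ (cutθ ψ U N) 1 (wd T) = 1 := by
    rw [hT, wd_append, wd_append, wd_append, pathSum_append, pathSum_append, pathSum_append]
    rw [one_mul, one_mul, one_mul, ← hb2, ← hb3, ← hb4]
    rw [cut_const U N (wd T1) 1 (Or.inl fun q hq => NB.self hq _)]
    rw [cut_const U N (wd T3) b3 (Or.inr fun q hq hu => far13 _ τ 0 (by omega) hu (NB.self hq _))]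
    rw [cut_far U N (wd T4) b4 (fun q hq hu => far24 _ K 0 (by omega) hu (NB.self hq _))]
    rw [cut_near U N (wd T2) b2 (fun q hq => NB.self hq _)]
    have u1 : U b2 := by
      have := NB.self (ψ := ψ) (b := 1) (List.prefix_refl (wd T1)) τ
      rwa [one_mul] at this
    have u2 : ¬ U (b2 * ψ (FreeGroup.mk (wd T2))) := by
      intro hu
      refine far13 _ τ 0 (by omega) hu ?_
      have := NB.self (ψ := ψ) (b := b3) (List.nil_prefix (l := wd T3)) 0
      rw [mk_nil', _root_.map_one, mul_one] at this
      rwa [hb2, ← _root_.map_mul, ← mk_app]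
    rw [if_pos u1, if_neg u2]; simp
  rw [hL] at hflux
  have hR : ∑ c, pathSum ψ (cutθ ψ U N) (gc c) (rc c) = 0 := by
    apply Finset.sum_eq_zero
    intro c _
    by_cases hc : idc c T = 0
    · exact cut_const U N _ _ (hj c hc)
    obtain ⟨a, haT, hac⟩ : ∃ a ∈ T, a.id = c := by
      have : 0 < idc c T := by omega
      simpa only [idc, List.countP_pos_iff, decide_eq_true_eq] using this
    obtain ⟨-, -, q0, hq0, hp⟩ := h.relt a haT
    rw [hac] at hq0 hp
    have hd : ∀ q, q <+: rc c → len ψ (a.p⁻¹ * (gc c * ψ (FreeGroup.mk q))) ≤ K := by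
      intro q hq; rw [hp]; exact cell_diam hs (hK _ (h.rcR _)) hq0 hq
    rw [hT] at haT hch hh
    rcases (by simpa [or_assoc] using haT : a ∈ T1 ∨ a ∈ T2 ∨ a ∈ T3 ∨ a ∈ T4) with ha | ha | ha | ha
    · obtain ⟨u, hu, hpu⟩ := tag_pos (A := []) (S := T1) (B := T2 ++ T3 ++ T4) (by simpa using hch) (by simpa using hh) ha
      rw [wd_nil, mk_nil', _root_.map_one] at hpu
      refine cut_const U N _ _ (Or.inl fun q hq => ?_)
      have := (NB.self (ψ := ψ) (b := 1) hu 0)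
      rw [← hpu] at this
      exact (this.trans hs (hd q hq)).mono (by omega)
    · obtain ⟨u, hu, hpu⟩ := tag_pos (A := T1) (S := T2) (B := T3 ++ T4) (by simpa using hch) (by simpa using hh) ha
      have := (NB.self (ψ := ψ) (b := b2) hu 0)
      rw [← hpu] at this
      rw [cut_near U N _ _ (fun q hq => (this.trans hs (hd q hq)).mono (by omega)), hψ _ (h.rcR c), mul_one, sub_self]
    · obtain ⟨u, hu, hpu⟩ := tag_pos (A := T1 ++ T2) (S := T3) (B := T4) (by simpa using hch) (by simpa using hh) ha
      rw [wd_append] at hpu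
      have := (NB.self (ψ := ψ) (b := b3) hu 0)
      rw [← hpu] at this
      exact cut_const U N _ _ (Or.inr fun q hq hq2 => far13 _ τ (0 + K) (by omega) hq2 (this.trans hs (hd q hq)))
    · obtain ⟨u, hu, hpu⟩ := tag_pos (A := T1 ++ T2 ++ T3) (S := T4) (B := []) (by simpa using hch) (by simpa using hh) ha
      rw [wd_append, wd_append] at hpu
      have := (NB.self (ψ := ψ) (b := b4) hu 0)
      rw [← hpu] at this
      exact cut_far U N _ _ (fun q hq hq2 => far24 _ K (0 + K) (by omega) hq2 (this.trans hs (hd q hq)))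
  omega

end flux
set_option linter.unusedSectionVars false
set_option linter.style.longLine false
section quadthm
variable {α : Type*} [DecidableEq α] {Q : Type*} [Group Q]
open FreeGroup

lemma pos2 {β : Type*} {a b u r : List β} (h : a ++ b = u ++ r) :
    (∃ v, a = u ++ v ∧ r = v ++ b) ∨ (∃ u', u = a ++ u' ∧ b = u' ++ r) := by
  rcases List.append_eq_append_iff.1 h with ⟨x, h1, h2⟩ | ⟨x, h1, h2⟩
  · exact Or.inr ⟨x, h1, h2⟩
  · exact Or.inl ⟨x, h1, h2⟩

lemma quad {Rs : Set (List (α × Bool))} {ψ : FreeGroup α →* Q}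
    (hs : Surjective ψ) (hSC : SC Rs) (hψ : ∀ r ∈ Rs, ψ (FreeGroup.mk r) = 1) {K : ℕ}
    (hK : ∀ r ∈ Rs, r.length ≤ K) (hker : ∀ w, ψ w = 1 → ∃ n, ALe Rs w n) :
    ∀ (l : ℕ) (s1 s2 s3 s4 : List (α × Bool)), s1.length + s2.length + s3.length + s4.length ≤ l →
    Geo ψ s1 → Geo ψ s2 → Geo ψ s3 → Geo ψ s4 → ψ (FreeGroup.mk (s1 ++ (s2 ++ (s3 ++ s4)))) = 1 →
    Near ψ (20 * (K + 1)) s1 s2 s3 ∨ Near ψ (20 * (K + 1)) s2 s3 s4 := by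
  intro l
  induction l with
  | zero =>
    intro s1 s2 s3 s4 hl g1 g2 g3 g4 hcl
    have h2 : s2 = [] := List.length_eq_zero_iff.1 (by omega)
    exact Or.inl ⟨s1, [], [], s3, by simp, by simp, by rw [h2]; simp [← one_eq_mk, len_one]⟩
  | succ l ih =>
    intro s1 s2 s3 s4 hl g1 g2 g3 g4 hcl
    have near0 : ∀ a b c u v u' v', a = u ++ v → c = u' ++ v' → ψ (FreeGroup.mk (v ++ b ++ u')) = 1 →
        Near ψ (20 * (K + 1)) a b c := by
      intro a b c u v u' v' h1 h2 h3
      exact ⟨u, v, u', v', h1, h2, by rw [h3, len_one]; omega⟩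
    by_cases n1 : s1 = []
    · right; exact near0 _ _ _ [] s2 s4 [] (by simp) (by simp) (by rw [n1] at hcl; simpa using hcl)
    by_cases n2 : s2 = []
    · left; exact near0 _ _ _ s1 [] [] s3 (by simp) (by simp) (by rw [n2]; simp [← one_eq_mk])
    by_cases n3 : s3 = []
    · right; exact near0 _ _ _ s2 [] [] s4 (by simp) (by simp) (by rw [n3]; simp [← one_eq_mk])
    by_cases n4 : s4 = []
    · left; exact near0 _ _ _ [] s1 s3 [] (by simp) (by simp) (by rw [n4] at hcl; simpa using hcl)
    by_cases hind : ∀ u z v, s1 ++ (s2 ++ (s3 ++ s4)) = u ++ z ++ v → z ≠ [] → u ++ v ≠ [] → ¬ ∃ n, ALe Rs (FreeGroup.mk z) n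
    · -- the main case
      have hl1 := List.length_pos_iff.2 n1
      have hl2 := List.length_pos_iff.2 n2
      have hl3 := List.length_pos_iff.2 n3
      have hne : FreeGroup.mk (s1 ++ (s2 ++ (s3 ++ s4))) ≠ 1 := by
        intro h1
        by_cases hred : FreeGroup.IsReduced (s1 ++ (s2 ++ (s3 ++ s4)))
        · have := red_uniq hred (v := []) (by simp [FreeGroup.IsReduced]) h1
          simp at this; exact n1 this.1
        · rw [isReduced_iff_not_step] at hred
          push Not at hred
          obtain ⟨L, hL⟩ := hred
          generalize hw : s1 ++ (s2 ++ (s3 ++ s4)) = w at hL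
          cases hL with
          | @not L1 L2 x b =>
            have hlw := congrArg List.length hw
            refine hind L1 [(x, b), (x, !b)] L2 (by rw [hw]; simp) (by simp) ?_ ⟨0, ?_⟩
            · intro h0
              have := congrArg List.length h0
              rw [List.length_append, List.length_nil] at this
              simp at hlw; omega
            · have e := mk_nx (x, b)
              have : FreeGroup.mk [(x, b), (x, !b)] = 1 := by
                rw [mk_cons']
                have e2 : nx (x, b) = (x, !b) := rfl
                rw [e2] at e; rw [e]; group
              rw [this]; exact ALe.one
      obtain ⟨N, I, _, _, gc, rc, ic, T, hS, hw, hh, -⟩ := hasState_min hSC hψ hne (hker _ hcl) hind 1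
      by_contra hnear
      rw [not_or] at hnear
      obtain ⟨T1, T', rfl, w1, hw'⟩ := List.map_eq_append_iff.1 hw
      obtain ⟨T2, T'', rfl, w2, hw''⟩ := List.map_eq_append_iff.1 hw'
      obtain ⟨T3, T4, rfl, w3, w4⟩ := List.map_eq_append_iff.1 hw''
      change wd T1 = s1 at w1
      change wd T2 = s2 at w2
      change wd T3 = s3 at w3
      change wd T4 = s4 at w4
      rw [← w1] at g1
      rw [← w2] at g2
      rw [← w3] at g3
      rw [← w4] at g4
      rw [← w1, ← w2, ← w3, ← w4] at hnear
      exact flux_core hs hSC hψ hK hS (by simp) hh g1 g2 g3 g4 hnear.1 hnear.2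
    · push Not at hind
      obtain ⟨u, z, v, he, hz, huv, n, hA⟩ := hind
      have hcz : ψ (FreeGroup.mk z) = 1 := hA.hom ψ hψ
      rw [List.append_assoc] at he
      have geo0 : ∀ a b, Geo ψ (a ++ z ++ b) → False := fun a b h => hz ((h.subw hs).nil_of_closed hcz)
      -- corner cuts
      have cut12 : ∀ a x y b, s1 = a ++ x → s2 = y ++ b → ψ (FreeGroup.mk (x ++ y)) = 1 → x ++ y ≠ [] →
          Near ψ (20 * (K + 1)) s1 s2 s3 ∨ Near ψ (20 * (K + 1)) s2 s3 s4 := by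
        intro a x y b h1 h2 h3 h4
        have := List.length_pos_iff.2 h4
        rw [List.length_append] at this
        have hl1 := congrArg List.length h1
        have hl2 := congrArg List.length h2
        rw [List.length_append] at hl1 hl2
        rw [mk_app, _root_.map_mul] at h3
        have h3' := eq_inv_of_mul_eq_one_left h3
        rcases ih a b s3 s4 (by omega) (Geo.subw hs (u := []) (v := x) (by simpa [← h1] using g1))
          (Geo.subw hs (u := y) (v := []) (by simpa [← h2] using g2)) g3 g4 (by
            rw [h1, h2] at hcl; simp only [mk_app, _root_.map_mul, h3'] at hcl ⊢; rw [← hcl]; group) with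
          ⟨p, q, p', q', e1, e2, e3⟩ | ⟨p, q, p', q', e1, e2, e3⟩
        · left
          refine ⟨p, q ++ x, p', q', by rw [h1, e1]; simp, e2, ?_⟩
          convert e3 using 2
          rw [h2]; simp only [mk_app, _root_.map_mul, h3']; group
        · right
          exact ⟨y ++ p, q, p', q', by rw [h2, e1]; simp, e2, e3⟩
      have cut23 : ∀ a x y b, s2 = a ++ x → s3 = y ++ b → ψ (FreeGroup.mk (x ++ y)) = 1 → x ++ y ≠ [] →
          Near ψ (20 * (K + 1)) s1 s2 s3 ∨ Near ψ (20 * (K + 1)) s2 s3 s4 := by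
        intro a x y b h1 h2 h3 h4
        have := List.length_pos_iff.2 h4
        rw [List.length_append] at this
        have hl1 := congrArg List.length h1
        have hl2 := congrArg List.length h2
        rw [List.length_append] at hl1 hl2
        rw [mk_app, _root_.map_mul] at h3
        have h3' := eq_inv_of_mul_eq_one_left h3
        rcases ih s1 a b s4 (by omega) g1 (Geo.subw hs (u := []) (v := x) (by simpa [← h1] using g2))
          (Geo.subw hs (u := y) (v := []) (by simpa [← h2] using g3)) g4 (by
            rw [h1, h2] at hcl; simp only [mk_app, _root_.map_mul, h3'] at hcl ⊢; rw [← hcl]; group) with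
          ⟨p, q, p', q', e1, e2, e3⟩ | ⟨p, q, p', q', e1, e2, e3⟩
        · left
          refine ⟨p, q, y ++ p', q', e1, by rw [h2, e2]; simp, ?_⟩
          convert e3 using 2
          rw [h1]; simp only [mk_app, _root_.map_mul, h3']; group
        · right
          refine ⟨p, q ++ x, p', q', by rw [h1, e1]; simp, e2, ?_⟩
          convert e3 using 2
          rw [h2]; simp only [mk_app, _root_.map_mul, h3']; group
      have cut34 : ∀ a x y b, s3 = a ++ x → s4 = y ++ b → ψ (FreeGroup.mk (x ++ y)) = 1 → x ++ y ≠ [] →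
          Near ψ (20 * (K + 1)) s1 s2 s3 ∨ Near ψ (20 * (K + 1)) s2 s3 s4 := by
        intro a x y b h1 h2 h3 h4
        have := List.length_pos_iff.2 h4
        rw [List.length_append] at this
        have hl1 := congrArg List.length h1
        have hl2 := congrArg List.length h2
        rw [List.length_append] at hl1 hl2
        rw [mk_app, _root_.map_mul] at h3
        have h3' := eq_inv_of_mul_eq_one_left h3
        rcases ih s1 s2 a b (by omega) g1 g2 (Geo.subw hs (u := []) (v := x) (by simpa [← h1] using g3))
          (Geo.subw hs (u := y) (v := []) (by simpa [← h2] using g4)) (by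
            rw [h1, h2] at hcl; simp only [mk_app, _root_.map_mul, h3'] at hcl ⊢; rw [← hcl]; group) with
          ⟨p, q, p', q', e1, e2, e3⟩ | ⟨p, q, p', q', e1, e2, e3⟩
        · left
          exact ⟨p, q, p', q' ++ x, e1, by rw [h1, e2]; simp, e3⟩
        · right
          refine ⟨p, q, y ++ p', q', e1, by rw [h2, e2]; simp, ?_⟩
          convert e3 using 2
          rw [h1]; simp only [mk_app, _root_.map_mul, h3']; group
      have cut41 : ∀ a x y b, s4 = a ++ x → s1 = y ++ b → ψ (FreeGroup.mk (b ++ (s2 ++ (s3 ++ a)))) = 1 → x ++ y ≠ [] →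
          Near ψ (20 * (K + 1)) s1 s2 s3 ∨ Near ψ (20 * (K + 1)) s2 s3 s4 := by
        intro a x y b h1 h2 h3 h4
        have := List.length_pos_iff.2 h4
        rw [List.length_append] at this
        have hl1 := congrArg List.length h1
        have hl2 := congrArg List.length h2
        rw [List.length_append] at hl1 hl2
        rcases ih b s2 s3 a (by omega) (Geo.subw hs (u := y) (v := []) (by simpa [← h2] using g1)) g2 g3
          (Geo.subw hs (u := []) (v := x) (by simpa [← h1] using g4)) h3 with
          ⟨p, q, p', q', e1, e2, e3⟩ | ⟨p, q, p', q', e1, e2, e3⟩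
        · left
          exact ⟨y ++ p, q, p', q', by rw [h2, e1]; simp, e2, e3⟩
        · right
          exact ⟨p, q, p', q' ++ x, e1, by rw [h1, e2]; simp, e3⟩
      rcases pos2 he with ⟨v1, a1, a2⟩ | ⟨u2, a1, a2⟩
      · -- z starts in s1
        rcases pos2 a2.symm with ⟨c, b1, b2⟩ | ⟨z2, b1, b2⟩
        · rw [b1] at a1; exact (geo0 u c (by rw [List.append_assoc, ← a1]; exact g1)).elim
        rcases pos2 b2 with ⟨c, b3, b4⟩ | ⟨z3, b3, b4⟩
        · exact cut12 u v1 z2 c a1 b3 (by rw [← b1]; exact hcz) (by rw [← b1]; exact hz)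
        rcases pos2 b4 with ⟨c, b5, b6⟩ | ⟨z4, b5, b6⟩
        · left; exact near0 _ _ _ u v1 z3 c a1 b5 (by rw [List.append_assoc, ← b3, ← b1]; exact hcz)
        · refine cut41 z4 v u v1 b6 a1 (by rw [← b5, ← b3, ← b1]; exact hcz) ?_
          intro h; apply huv; simp at h; simp [h]
      rcases pos2 a2 with ⟨v2, a3, a4⟩ | ⟨u3, a3, a4⟩
      · rcases pos2 a4.symm with ⟨c, b1, b2⟩ | ⟨z2, b1, b2⟩
        · rw [b1] at a3; exact (geo0 u2 c (by rw [List.append_assoc, ← a3]; exact g2)).elim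
        rcases pos2 b2 with ⟨c, b3, b4⟩ | ⟨z3, b3, b4⟩
        · exact cut23 u2 v2 z2 c a3 b3 (by rw [← b1]; exact hcz) (by rw [← b1]; exact hz)
        · right; exact near0 _ _ _ u2 v2 z3 v a3 b4 (by rw [List.append_assoc, ← b3, ← b1]; exact hcz)
      rcases pos2 a4 with ⟨v3, a5, a6⟩ | ⟨u4, a5, a6⟩
      · rcases pos2 a6.symm with ⟨c, b1, b2⟩ | ⟨z2, b1, b2⟩
        · rw [b1] at a5; exact (geo0 u3 c (by rw [List.append_assoc, ← a5]; exact g3)).elim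
        · exact cut34 u3 v3 z2 v a5 b2 (by rw [← b1]; exact hcz) (by rw [← b1]; exact hz)
      · exact (geo0 u4 v (by rw [List.append_assoc, ← a6]; exact g4)).elim

end quadthm
set_option linter.unusedSectionVars false
set_option linter.style.longLine false
section fourpt
variable {α : Type*} [DecidableEq α] {Q : Type*} [Group Q]
open FreeGroup

lemma four_point {Rs : Set (List (α × Bool))} {ψ : FreeGroup α →* Q}
    (hs : Surjective ψ) (hSC : SC Rs) (hψ : ∀ r ∈ Rs, ψ (FreeGroup.mk r) = 1) {K : ℕ}
    (hK : ∀ r ∈ Rs, r.length ≤ K) (hker : ∀ w, ψ w = 1 → ∃ n, ALe Rs w n) (a b c d : Q) :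
    len ψ (a⁻¹ * c) + len ψ (b⁻¹ * d) ≤ len ψ (a⁻¹ * b) + len ψ (c⁻¹ * d) + 40 * (K + 1) ∨
    len ψ (a⁻¹ * c) + len ψ (b⁻¹ * d) ≤ len ψ (b⁻¹ * c) + len ψ (d⁻¹ * a) + 40 * (K + 1) := by
  obtain ⟨s1, l1, e1⟩ := exists_geo hs (a⁻¹ * b)
  obtain ⟨s2, l2, e2⟩ := exists_geo hs (b⁻¹ * c)
  obtain ⟨s3, l3, e3⟩ := exists_geo hs (c⁻¹ * d)
  obtain ⟨s4, l4, e4⟩ := exists_geo hs (d⁻¹ * a)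
  have key : ∀ (a b c d : Q) (s1 s2 s3 : List (α × Bool)), s1.length = len ψ (a⁻¹ * b) → ψ (FreeGroup.mk s1) = a⁻¹ * b →
      ψ (FreeGroup.mk s2) = b⁻¹ * c → s3.length = len ψ (c⁻¹ * d) → ψ (FreeGroup.mk s3) = c⁻¹ * d →
      Near ψ (20 * (K + 1)) s1 s2 s3 →
      len ψ (a⁻¹ * c) + len ψ (b⁻¹ * d) ≤ len ψ (a⁻¹ * b) + len ψ (c⁻¹ * d) + 40 * (K + 1) := by
    rintro a b c d s1 s2 s3 l1 e1 e2 l3 e3 ⟨u, v, u', v', rfl, rfl, h⟩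
    rw [← l1, ← l3]
    set x := ψ (FreeGroup.mk (v ++ s2 ++ u')) with hx
    have f1 : a⁻¹ * c = ψ (FreeGroup.mk u) * x * (ψ (FreeGroup.mk u'))⁻¹ := by
      rw [hx]; simp only [mk_app, _root_.map_mul] at e1 ⊢
      have : ψ (FreeGroup.mk v) = (ψ (FreeGroup.mk u))⁻¹ * (a⁻¹ * b) := by rw [← e1]; group
      rw [this, e2]; group
    have f2 : b⁻¹ * d = (ψ (FreeGroup.mk v))⁻¹ * x * ψ (FreeGroup.mk v') := by
      rw [hx]; simp only [mk_app, _root_.map_mul] at e3 ⊢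
      have : ψ (FreeGroup.mk v') = (ψ (FreeGroup.mk u'))⁻¹ * (c⁻¹ * d) := by rw [← e3]; group
      rw [this, e2]; group
    rw [f1, f2]
    have h1 := len_mul hs (ψ (FreeGroup.mk u) * x) (ψ (FreeGroup.mk u'))⁻¹
    have h2 := len_mul hs (ψ (FreeGroup.mk u)) x
    have h3 := len_mul hs ((ψ (FreeGroup.mk v))⁻¹ * x) (ψ (FreeGroup.mk v'))
    have h4 := len_mul hs (ψ (FreeGroup.mk v))⁻¹ x
    rw [len_inv hs] at h1 h4
    have := len_le ψ u
    have := len_le ψ v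
    have := len_le ψ u'
    have := len_le ψ v'
    simp only [List.length_append]
    omega
  have geo : ∀ (s : List (α × Bool)) (x : Q), s.length = len ψ x → ψ (FreeGroup.mk s) = x → Geo ψ s := by
    intro s x h1 h2; unfold Geo; rw [h2, h1]
  rcases quad hs hSC hψ hK hker _ s1 s2 s3 s4 le_rfl (geo _ _ l1 e1) (geo _ _ l2 e2) (geo _ _ l3 e3) (geo _ _ l4 e4)
    (by simp only [mk_app, _root_.map_mul, e1, e2, e3, e4]; group) with h | h
  · left; exact key a b c d s1 s2 s3 l1 e1 e2 l3 e3 h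
  · right
    have := key b c d a s2 s3 s4 l2 e2 e3 l4 e4 h
    have e : len ψ (c⁻¹ * a) = len ψ (a⁻¹ * c) := by rw [← len_inv hs]; congr 1; group
    omega

end fourpt
set_option linter.unusedSectionVars false
set_option linter.style.longLine false
section endgame
variable {α : Type*} [DecidableEq α] {Q : Type*} [Group Q]
open FreeGroup

lemma AreaLe.nil {R : Set (FreeGroup α)} : AreaLe R 1 0 := ⟨[], rfl, by simp, by simp⟩
lemma AreaLe.mul {R : Set (FreeGroup α)} {u v n m} (h : AreaLe R u n) (h' : AreaLe R v m) : AreaLe R (u * v) (n + m) := by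
  obtain ⟨L, h1, h2, rfl⟩ := h
  obtain ⟨M, h3, h4, rfl⟩ := h'
  refine ⟨L ++ M, by simp [h1, h3], ?_, by simp⟩
  intro p hp
  rcases List.mem_append.1 hp with hp | hp
  · exact h2 p hp
  · exact h4 p hp
lemma AreaLe.single {R : Set (FreeGroup α)} {r} (h : r ∈ R) (g) : AreaLe R (g * r * g⁻¹) 1 :=
  ⟨[(g⁻¹, r)], rfl, by simp [h], by simp⟩

lemma chunk (m : ℕ) : ∀ (l : ℕ) (s : List (α × Bool)), s.length ≤ l * m →
    ∃ hs : List (FreeGroup α), hs.length = l ∧ (∀ h ∈ hs, h.norm ≤ m) ∧ hs.prod = FreeGroup.mk s := by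
  intro l
  induction l with
  | zero =>
    intro s h
    simp at h; subst h
    exact ⟨[], rfl, by simp, by simp [one_eq_mk]⟩
  | succ l ih =>
    intro s h
    obtain ⟨hs, h1, h2, h3⟩ := ih (s.drop m) (by rw [List.length_drop, Nat.succ_mul] at *; omega)
    refine ⟨FreeGroup.mk (s.take m) :: hs, by simp [h1], ?_, ?_⟩
    · intro h hh
      rcases List.mem_cons.1 hh with rfl | hh
      · exact norm_mk_le.trans (by simp)
      · exact h2 h hh
    · rw [List.prod_cons, h3, ← mk_app, List.take_append_drop]

lemma len_norm (ψ : FreeGroup α →* Q) (g : FreeGroup α) : len ψ (ψ g) ≤ g.norm := by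
  have := len_le ψ g.toWord
  rwa [mk_toWord] at this

lemma area_list {Rs : Set (List (α × Bool))} {ψ : FreeGroup α →* Q}
    (hs : Surjective ψ) (hSC : SC Rs) (hψ : ∀ r ∈ Rs, ψ (FreeGroup.mk r) = 1) {K : ℕ}
    (hK : ∀ r ∈ Rs, r.length ≤ K) (hker : ∀ w, ψ w = 1 → ∃ n, ALe Rs w n) {m : ℕ} (hm : 40 * (K + 1) ≤ m)
    {R : Set (FreeGroup α)} (hR : ∀ w : FreeGroup α, w.norm ≤ 8 * m → ψ w = 1 → w ∈ R) :
    ∀ (N : ℕ) (H : List (FreeGroup α)), H.length = N → (∀ h ∈ H, h.norm ≤ m) → ψ H.prod = 1 →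
      ∃ l ≤ N + 1, AreaLe R H.prod l := by
  intro N
  induction N with
  | zero =>
    intro H hl _ _
    rw [List.length_eq_zero_iff.1 hl]
    exact ⟨0, by omega, AreaLe.nil⟩
  | succ N ih =>
    intro H hl hH hcl
    -- replacing a block
    have repl : ∀ (A M B M' : List (FreeGroup α)), H = A ++ M ++ B → M.length = M'.length + 1 → M.prod.norm + M'.prod.norm ≤ 8 * m →
        (∀ h ∈ M', h.norm ≤ m) → ψ M.prod = ψ M'.prod → ∃ l ≤ N + 1 + 1, AreaLe R H.prod l := by
      intro A M B M' e1 e2 e3 e4 e5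
      obtain ⟨l, h1, h2⟩ := ih (A ++ M' ++ B) (by rw [e1] at hl; simp at hl ⊢; omega) (by
        intro h hh
        simp only [List.mem_append] at hh
        rcases hh with (hh | hh) | hh
        · exact hH h (by rw [e1]; simp [hh])
        · exact e4 h hh
        · exact hH h (by rw [e1]; simp [hh])) (by
        rw [e1] at hcl; simp only [List.prod_append, _root_.map_mul] at hcl ⊢; rw [← e5]; exact hcl)
      refine ⟨1 + l, by omega, ?_⟩
      have := (AreaLe.single (R := R) (r := M.prod * M'.prod⁻¹) (hR _ ?_ ?_) A.prod).mul h2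
      · convert this using 1
        rw [e1]; simp only [List.prod_append]; group
      · refine (FreeGroup.norm_mul_le _ _).trans ?_
        rw [norm_inv_eq]; exact e3
      · rw [_root_.map_mul, _root_.map_inv, e5, mul_inv_cancel]
    rcases N with _ | N
    · obtain ⟨h, rfl⟩ := List.length_eq_one_iff.1 hl
      refine ⟨1, by omega, ?_⟩
      have := AreaLe.single (R := R) (r := h) (hR _ ((hH h (by simp)).trans (by omega)) (by simpa using hcl)) 1
      simpa using this
    set x : ℕ → Q := fun i => ψ (H.take i).prod with hx
    have hxs : ∀ i j, ψ ((H.drop i).take j).prod = (x i)⁻¹ * x (i + j) := by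
      intro i j
      simp only [hx]
      rw [List.take_add, List.prod_append, _root_.map_mul]; group
    have hnorm : ∀ M : List (FreeGroup α), (∀ h ∈ M, h.norm ≤ m) → M.prod.norm ≤ M.length * m := by
      intro M
      induction M with
      | nil => simp
      | cons a M ihM =>
        intro hM
        have h1 := ihM (fun h hh => hM h (by simp [hh]))
        have h2 := hM a (by simp)
        rw [List.prod_cons, List.length_cons, Nat.succ_mul]
        have := FreeGroup.norm_mul_le a M.prod
        omega
    have hsub : ∀ i j, ((H.drop i).take j).prod.norm ≤ j * m := by
      intro i j
      refine (hnorm _ ?_).trans (Nat.mul_le_mul_right _ (by simp))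
      intro h hh
      exact hH h (List.mem_of_mem_drop (List.mem_of_mem_take hh))
    have hstep : ∀ i j, len ψ ((x i)⁻¹ * x (i + j)) ≤ j * m := by
      intro i j
      rw [← hxs]; exact (len_norm ψ _).trans (hsub i j)
    -- general replacement
    have red : ∀ i j, 1 ≤ j → j ≤ 4 → i + j ≤ H.length → len ψ ((x i)⁻¹ * x (i + j)) ≤ (j - 1) * m →
        ∃ l ≤ N + 1 + 1 + 1, AreaLe R H.prod l := by
      intro i j hj1 hj4 hij hlen
      obtain ⟨s, l1, l2⟩ := exists_geo hs ((x i)⁻¹ * x (i + j))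
      obtain ⟨M', q1, q2, q3⟩ := chunk m (j - 1) s (by omega)
      refine repl (H.take i) ((H.drop i).take j) ((H.drop i).drop j) M' ?_ ?_ ?_ q2 ?_
      · rw [List.append_assoc, List.take_append_drop, List.take_append_drop]
      · rw [q1, List.length_take, List.length_drop]; omega
      · have h1 := hsub i j
        have h2 := hnorm M' q2
        rw [q1] at h2
        have h3 : j * m ≤ 4 * m := Nat.mul_le_mul_right _ hj4
        have h4 : (j - 1) * m ≤ 4 * m := Nat.mul_le_mul_right _ (by omega)
        omega
      · rw [hxs, q3, l2]
    have hx0 : x 0 = 1 := by simp [hx]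
    have hxN : x (N + 1 + 1) = 1 := by
      simp only [hx]; rw [← hl, List.take_length]; exact hcl
    by_cases h2 : len ψ (x 2) ≤ m
    · exact red 0 2 (by omega) (by omega) (by omega) (by rw [hx0]; simpa using h2)
    obtain ⟨i, hi, hmax⟩ := Finset.exists_max_image (Finset.range (N + 3)) (fun i => len ψ (x i)) ⟨0, by simp⟩
    rw [Finset.mem_range] at hi
    have hi2 := hmax 2 (by simp)
    have i0 : i ≠ 0 := by rintro rfl; rw [hx0, len_one] at hi2; omega
    have i1 : i ≠ 1 := by
      rintro rfl
      have := hstep 0 1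
      rw [hx0] at this; simp at this; omega
    have iN : i ≠ N + 1 + 1 := by rintro rfl; rw [hxN, len_one] at hi2; omega
    have iN' : i ≠ N + 1 := by
      rintro rfl
      have := hstep (N + 1) 1
      rw [hxN, mul_one, len_inv hs] at this; omega
    obtain ⟨i, rfl⟩ : ∃ k, i = k + 2 := ⟨i - 2, by omega⟩
    have s1 := hstep i 2
    have s2 := hstep (i + 2) 2
    have m1 := hmax i (by simp; omega)
    have m2 := hmax (i + 2 + 2) (by simp; omega)
    apply red i 4 (by omega) (by omega) (by omega)
    have h4 := four_point hs hSC hψ hK hker (x 0) (x i) (x (i + 2)) (x (i + 2 + 2))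
    rw [hx0] at h4
    simp only [inv_one, one_mul, mul_one, len_inv hs] at h4
    change len ψ ((x i)⁻¹ * x (i + 2 + 2)) ≤ (4 - 1) * m
    omega

lemma area_word {Rs : Set (List (α × Bool))} {ψ : FreeGroup α →* Q}
    (hs : Surjective ψ) (hSC : SC Rs) (hψ : ∀ r ∈ Rs, ψ (FreeGroup.mk r) = 1) {K : ℕ}
    (hK : ∀ r ∈ Rs, r.length ≤ K) (hker : ∀ w, ψ w = 1 → ∃ n, ALe Rs w n) {m : ℕ} (hm : 40 * (K + 1) ≤ m)
    {R : Set (FreeGroup α)} (hR : ∀ w : FreeGroup α, w.norm ≤ 8 * m → ψ w = 1 → w ∈ R)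
    {n : ℕ} {w : FreeGroup α} (hw : w.norm ≤ n) (hc : ψ w = 1) : area R w ≤ n / m + 2 := by
  have hlt : n < m * (n / m + 1) := Nat.lt_mul_div_succ n (by omega)
  obtain ⟨H, h1, h2, h3⟩ := chunk m (n / m + 1) w.toWord (by
    have : w.toWord.length ≤ n := hw
    rw [mul_comm]; omega)
  rw [mk_toWord] at h3
  obtain ⟨l, h4, h5⟩ := area_list hs hSC hψ hK hker hm hR _ H h1 h2 (by rw [h3]; exact hc)
  rw [h3] at h5
  exact (Nat.sInf_le h5).trans (by omega)

end endgame
set_option linter.unusedSectionVars false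
set_option linter.unusedVariables false
section Final
open FreeGroup

lemma winv_eq {α : Type*} (w : List (α × Bool)) : winv w = invRev w := rfl

lemma invRev_rot {α : Type*} {l l' : List (α × Bool)} (h : l ~r l') : invRev l ~r invRev l' := by
  exact (h.map _).reverse

lemma mem_cs {α : Type*} {S : Set (List (α × Bool))} {w} :
    w ∈ CyclicShifts S ↔ ∃ r ∈ S, r ~r w ∨ invRev r ~r w := by
  constructor
  · rintro ⟨r, hr, n, h | h⟩
    · exact ⟨r, hr, Or.inl ⟨n, h.symm⟩⟩
    · exact ⟨r, hr, Or.inr ⟨n, h.symm⟩⟩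
  · rintro ⟨r, hr, ⟨n, h⟩ | ⟨n, h⟩⟩
    · exact ⟨r, hr, n, Or.inl h.symm⟩
    · exact ⟨r, hr, n, Or.inr h.symm⟩

lemma red_conv {α : Type*} {w : List (α × Bool)} (h : ReducedWord w) : FreeGroup.IsReduced w := by
  refine List.IsChain.imp ?_ h
  intro a b hab h1
  by_contra h2
  exact hab ⟨h1, by cases h3 : a.2 <;> cases h4 : b.2 <;> simp_all⟩

lemma red_inv {α : Type*} {w : List (α × Bool)} (h : FreeGroup.IsReduced w) :
    FreeGroup.IsReduced (invRev w) := by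
  unfold FreeGroup.IsReduced invRev
  rw [List.isChain_reverse, List.isChain_map]
  refine List.IsChain.imp ?_ h
  intro a b hab h1
  simp only [Bool.not_eq_eq_eq_not] at *
  simp [hab h1.symm]

lemma rot_app {α : Type*} (u v : List α) : (u ++ v) ~r (v ++ u) := List.isRotated_append

lemma SC_of {α : Type*} {S : Set (List (α × Bool))} (hred : ReducedPresentation S)
    (hsc : SmallCancellation (1 / 6) S) : SC {w | w ∈ CyclicShifts S ∧ w ≠ []} where
  rot := by
    rintro u v ⟨h, h0⟩
    refine ⟨?_, by simp at h0 ⊢; tauto⟩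
    rw [mem_cs] at h ⊢
    obtain ⟨r, hr, h | h⟩ := h
    · exact ⟨r, hr, Or.inl (h.trans (rot_app u v))⟩
    · exact ⟨r, hr, Or.inr (h.trans (rot_app u v))⟩
  inv := by
    rintro w ⟨h, h0⟩
    refine ⟨?_, ?_⟩
    · rw [mem_cs] at h ⊢
      obtain ⟨r, hr, h | h⟩ := h
      · exact ⟨r, hr, Or.inr (invRev_rot h)⟩
      · refine ⟨r, hr, Or.inl ?_⟩
        have := invRev_rot h
        rwa [invRev_invRev] at this
    · intro h
      apply h0
      have := congrArg List.length h
      rw [invRev_length] at this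
      exact List.length_eq_zero_iff.1 this
  red := by
    rintro w ⟨h, h0⟩
    rw [mem_cs] at h
    obtain ⟨r, hr, h | h⟩ := h
    · obtain ⟨n, rfl⟩ := h
      exact red_conv (hred r hr n)
    · have := invRev_rot h
      rw [invRev_invRev] at this
      obtain ⟨n, h⟩ := this
      have := red_inv (red_conv (hred r hr n))
      rwa [h, invRev_invRev] at this
  ne := fun r h => h.2
  pc := by
    rintro ρ ⟨h1, _⟩ σ ⟨h2, _⟩ hne U hU hV
    have := hsc ρ h1 σ h2 hne U hU hV
    have a1 := min_le_left (ρ.length : ℝ) (σ.length : ℝ)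
    have a2 := min_le_right (ρ.length : ℝ) (σ.length : ℝ)
    constructor
    · have : (6 : ℝ) * U.length < ρ.length := by linarith
      exact_mod_cast this
    · have : (6 : ℝ) * U.length < σ.length := by linarith
      exact_mod_cast this

lemma mk_rot {α G : Type*} [Group G] (φ : FreeGroup α →* G) {l l' : List (α × Bool)} (h : l ~r l')
    (hl : φ (FreeGroup.mk l) = 1) : φ (FreeGroup.mk l') = 1 := by
  obtain ⟨n, rfl⟩ := h
  rw [List.rotate_eq_drop_append_take_mod, ← FreeGroup.mul_mk, _root_.map_mul]
  rw [← List.take_append_drop (n % l.length) l, ← FreeGroup.mul_mk, _root_.map_mul] at hl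
  exact mul_eq_one_comm.1 hl

lemma mk_cs {α G : Type*} [Group G] (φ : FreeGroup α →* G) {S : Set (List (α × Bool))}
    (hS : ∀ r ∈ S, φ (FreeGroup.mk r) = 1) {w} (hw : w ∈ CyclicShifts S) : φ (FreeGroup.mk w) = 1 := by
  rw [mem_cs] at hw
  obtain ⟨r, hr, h | h⟩ := hw
  · exact mk_rot φ h (hS r hr)
  · refine mk_rot φ h ?_
    rw [← FreeGroup.inv_mk, _root_.map_inv, hS r hr, inv_one]

lemma wnorm_eq {α : Type*} [DecidableEq α] (w : FreeGroup α) : wnorm w = w.norm := by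
  unfold wnorm; congr!

lemma isoSpec_bound {α : Type*} [DecidableEq α] {G : Type*} [Group G] (φ : FreeGroup α →* G)
    (S : Set (List (α × Bool)))
    (hker : φ.ker = Subgroup.normalClosure (FreeGroup.mk '' S))
    (hred : ReducedPresentation S)
    (hsc : SmallCancellation (1 / 6) S) (k m n : ℕ) (hk : 0 < k) (hkm : 120 * k ≤ m) :
    isoSpec φ k (120 * m) n ≤ n / m + 2 := by
  have hSC := SC_of hred hsc
  set Rs := {w | w ∈ CyclicShifts S ∧ w ≠ []} with hRs
  have hS : ∀ r ∈ S, φ (FreeGroup.mk r) = 1 := by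
    intro r hr
    rw [← MonoidHom.mem_ker, hker]
    exact Subgroup.subset_normalClosure ⟨r, hr, rfl⟩
  have hle : φ.ker ≤ Subgroup.normalClosure (FreeGroup.mk '' Rs) := by
    rw [hker]
    refine Subgroup.normalClosure_le_normal ?_
    rintro _ ⟨r, hr, rfl⟩
    by_cases h0 : r = []
    · subst h0; exact Subgroup.one_mem _
    · exact Subgroup.subset_normalClosure ⟨r, ⟨mem_cs.2 ⟨r, hr, Or.inl (List.IsRotated.refl _)⟩, h0⟩, rfl⟩
  set N0 := Subgroup.normalClosure (FreeGroup.mk '' (Rsh Rs (2 * k))) with hN0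
  have hN0ker : N0 ≤ φ.ker := by
    refine Subgroup.normalClosure_le_normal ?_
    rintro _ ⟨r, hr, rfl⟩
    exact mk_cs φ hS hr.1.1
  have htriv : Subgroup.normalClosure (triv φ k) ≤ N0 := by
    refine Subgroup.normalClosure_le_normal ?_
    rintro g ⟨hg, hg1⟩
    rw [wnorm_eq] at hg
    exact dehn_closure hSC (K := 2 * k) k g hg le_rfl (hle hg1)
  unfold isoSpec
  refine csSup_le ⟨_, 1, ⟨Subgroup.one_mem _, by rw [wnorm_eq]; simp⟩, rfl⟩ ?_
  rintro _ ⟨w, ⟨hw, hwn⟩, rfl⟩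
  rw [wnorm_eq] at hwn
  have hq : ∀ w, QuotientGroup.mk' N0 w = 1 ↔ w ∈ N0 := fun w => by
    rw [← MonoidHom.mem_ker, QuotientGroup.ker_mk']
  refine area_word (ψ := QuotientGroup.mk' N0) (Rs := Rsh Rs (2 * k)) (K := 2 * k)
    (QuotientGroup.mk'_surjective _) (hSC.short _) ?_ ?_ ?_ ?_ ?_ hwn ?_
  · intro r hr
    rw [hq]; exact Subgroup.subset_normalClosure ⟨r, hr, rfl⟩
  · intro r hr; exact hr.2
  · intro w hw
    rw [hq] at hw
    exact ALe_of_mem (hSC.short _).inv hw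
  · omega
  · intro w h1 h2
    rw [hq] at h2
    exact ⟨by rw [wnorm_eq]; omega, hN0ker h2⟩
  · rw [hq]; exact htriv hw

end Final
/-- A finitely generated group admitting a (possibly infinite) reduced
`C'(1/6)` small cancellation presentation has linear isoperimetric spectrum. -/
theorem linear_isoSpec_of_smallCancellation {G : Type} [Group G] {a : ℕ}
    (φ : FreeGroup (Fin a) →* G) (hφ : Surjective φ)
    (𝓡 : Set (List (Fin a × Bool)))
    (hker : φ.ker = Subgroup.normalClosure (FreeGroup.mk '' 𝓡))
    (hred : ReducedPresentation 𝓡)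
    (hsc : SmallCancellation (1 / 6) 𝓡) :
    SpecEquiv (isoSpecR φ) linSpec := by
  constructor
  · refine ⟨120, by norm_num, ?_⟩
    intro k m n hk hm hn hkm
    have h := isoSpec_bound φ 𝓡 hker hred hsc k m n hk hkm
    have h1 : (isoSpec φ k (120 * m) n : ℝ) ≤ ((n / m : ℕ) : ℝ) + 2 := by exact_mod_cast h
    have h2 : ((n / m : ℕ) : ℝ) ≤ (n : ℝ) / m := Nat.cast_div_le
    have h3 : (0 : ℝ) ≤ (n : ℝ) / m := by positivity
    simp only [isoSpecR, linSpec]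
    push_cast
    rw [mul_div_assoc]
    linarith
  · refine ⟨1, by norm_num, ?_⟩
    intro k m n hk hm hn hkm
    have h : (0 : ℝ) ≤ isoSpecR φ (1 * k) m (1 * n) := by unfold isoSpecR; positivity
    simp only [linSpec]
    push_cast
    simp only [one_mul] at *
    linarith


end IsoSpecPaper
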